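/- Let Ω, Ω' ⊂ ℝ^n be open, n ≥ 2, and let f ∈ W^{1,1}_{loc}(Ω; Ω') be a homeomorphism. Then K^{fine}_f(x)^{n-1} J_f(x) = (2^n/ω_n) ‖∇f(x)‖^n for a.e. x ∈ Ω at which K^{fine}_f(x) < ∞. -/

import Mathlib

open MeasureTheory Metric Set Filter ENNReal NNReal Topology

noncomputable section

/-- Euclidean space `ℝⁿ`. -/
abbrev En (n : ℕ) : Type := EuclideanSpace ℝ (Fin n)

variable {n : ℕ}

/-- `g` is the weak (distributional) gradient of `u : ℝⁿ → ℝ` on all of `ℝⁿ`. -/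
def IsWeakGrad (u : En n → ℝ) (g : En n → (En n →L[ℝ] ℝ)) : Prop :=
  ∀ φ : En n → ℝ, ContDiff ℝ 1 φ → HasCompactSupport φ →
    ∀ v : En n, ∫ x, u x * fderiv ℝ φ x v = - ∫ x, φ x * g x v

/-- The Sobolev 1-capacity: infimum of `W^{1,1}` norms of functions `u ≥ 1` on a
neighborhood of `A`. -/
def cap1 (A : Set (En n)) : ℝ≥0∞ :=
  sInf { c : ℝ≥0∞ | ∃ u : En n → ℝ, ∃ g : En n → (En n →L[ℝ] ℝ),
    Integrable u ∧ Integrable (fun x => ‖g x‖) ∧ IsWeakGrad u g ∧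
    (∃ V : Set (En n), IsOpen V ∧ A ⊆ V ∧ ∀ x ∈ V, 1 ≤ u x) ∧
    c = ENNReal.ofReal ((∫ x, |u x|) + ∫ x, ‖g x‖) }

/-- A set `U ⊆ ℝⁿ` is 1-finely open. -/
def FinelyOpen1 (U : Set (En n)) : Prop :=
  ∀ x ∈ U, Tendsto (fun r : ℝ => cap1 (Uᶜ ∩ ball x r) / ENNReal.ofReal (r ^ (n - 1)))
    (𝓝[>] 0) (𝓝 0)

/-- The relaxed quasiconformality quotient `K_{f,U}(x,r)`. -/
def KfU (f : En n → En n) (U : Set (En n)) (x : En n) (r : ℝ) : ℝ≥0∞ :=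
  if volume (f '' ball x r) = 0 then ∞
  else (EMetric.diam (f '' (ball x r ∩ U)) ^ n / volume (f '' ball x r)) ^ (((n : ℝ) - 1)⁻¹)

/-- Fine quasiconformal dilatation `K_f^fine(x)`. -/
def Kfine (f : En n → En n) (x : En n) : ℝ≥0∞ :=
  ⨅ (U : Set (En n)) (_ : FinelyOpen1 U) (_ : x ∈ U),
    Filter.limsup (fun r => KfU f U x r) (𝓝[>] 0)

/-- Metric quasiconformal dilatation `K_f(x)`. -/
def Kmetric (f : En n → En n) (x : En n) : ℝ≥0∞ :=
  Filter.limsup (fun r => KfU f univ x r) (𝓝[>] 0)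

/-- Volume derivative (Jacobian) `J_f(x)`. -/
def Jvol (f : En n → En n) (x : En n) : ℝ≥0∞ :=
  Filter.limsup (fun r => volume (f '' ball x r) / volume (ball x r)) (𝓝[>] 0)

/-- `g` is the weak gradient of the mapping `f : ℝⁿ → ℝⁿ` on the open set `Ω`. -/
def HasWeakGradOn (f : En n → En n) (g : En n → (En n →L[ℝ] En n)) (Ω : Set (En n)) : Prop :=
  ∀ φ : En n → ℝ, ContDiff ℝ 1 φ → HasCompactSupport φ → tsupport φ ⊆ Ω →
    ∀ v : En n, ∫ x in Ω, (fderiv ℝ φ x v) • f x = - ∫ x in Ω, φ x • g x v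

/-- The precise representative `f*` (componentwise limsup of ball averages). -/
def precise (f : En n → En n) (x : En n) : En n :=
  (EuclideanSpace.equiv (Fin n) ℝ).symm
    (fun i => Filter.limsup (fun r => ⨍ y in ball x r, f y i) (𝓝[>] 0))

/-- Centered Hardy–Littlewood maximal function of `u : ℝⁿ → ℝ`. -/
def maxFn (u : En n → ℝ) (x : En n) : ℝ≥0∞ :=
  ⨆ (r : ℝ) (_ : 0 < r), (volume (ball x r))⁻¹ * ∫⁻ y in ball x r, ‖u y‖₊

/-- Centered Hardy–Littlewood maximal function of `ρ : ℝⁿ → ℝ≥0∞`. -/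
def maxFn' (ρ : En n → ℝ≥0∞) (x : En n) : ℝ≥0∞ :=
  ⨆ (r : ℝ) (_ : 0 < r), (volume (ball x r))⁻¹ * ∫⁻ y in ball x r, ρ y

open scoped Convolution in
/-- A `C¹` compactly supported primitive in the direction `v` of `χ - χ(· - T v)`. -/
lemma exists_directional_primitive {χ : En n → ℝ} (hχ : ContDiff ℝ 1 χ) {x v : En n} {r T : ℝ}
    (hr : 0 < r) (hT : 0 ≤ T) (hv : ‖v‖ = 1) (h01 : ∀ y, χ y ∈ Icc (0 : ℝ) 1)
    (hsupp : ∀ y, y ∉ ball x r → χ y = 0) :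
    ∃ φ : En n → ℝ, ContDiff ℝ 1 φ ∧ HasCompactSupport φ ∧ (∀ y, ‖φ y‖ ≤ 4 * r) ∧
      ∀ y, fderiv ℝ φ y v = χ y - χ (y - T • v) := by
  have hcs : HasCompactSupport χ := HasCompactSupport.intro (isCompact_closedBall x r)
    fun y hy => hsupp y fun h => hy (ball_subset_closedBall h)
  have hχc := hχ.continuous
  set μ : Measure (En n) := Measure.map (fun s : ℝ => s • v) (volume.restrict (Ioc 0 T)) with hμ
  have hmeas : Measurable (fun s : ℝ => s • v) := by fun_prop
  have : IsFiniteMeasure μ := by rw [hμ]; infer_instance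
  set φ : En n → ℝ := (fun _ => (1 : ℝ)) ⋆[ContinuousLinearMap.lsmul ℝ ℝ, μ] χ with hφ
  have hφ_eq : ∀ y, φ y = ∫ s in (0 : ℝ)..T, χ (y - s • v) := by
    intro y
    rw [intervalIntegral.integral_of_le hT]
    simp only [hφ, convolution_def, ContinuousLinearMap.lsmul_apply, one_smul]
    rw [hμ, integral_map hmeas.aemeasurable]
    exact (by fun_prop : Continuous fun t => χ (y - t)).aestronglyMeasurable
  have hφC : ContDiff ℝ 1 φ :=
    hcs.contDiff_convolution_right (n := 1) _ (locallyIntegrable_const _) hχ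
  refine ⟨φ, hφC, ?_, ?_, ?_⟩
  · refine HasCompactSupport.intro (isCompact_closedBall x (r + T)) fun y hy => ?_
    rw [hφ_eq]
    refine (intervalIntegral.integral_congr (g := fun _ => 0) fun s hs => ?_).trans (by simp)
    rw [uIcc_of_le hT] at hs
    refine hsupp _ fun h => hy ?_
    rw [mem_ball, dist_eq_norm] at h
    rw [mem_closedBall, dist_eq_norm]
    calc ‖y - x‖ = ‖(y - s • v - x) + s • v‖ := by congr 1; abel
      _ ≤ ‖y - s • v - x‖ + ‖s • v‖ := norm_add_le _ _
      _ ≤ r + T := by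
        rw [norm_smul, hv, mul_one, Real.norm_of_nonneg hs.1]; linarith [hs.2]
  · intro y
    rw [hφ_eq, intervalIntegral.integral_of_le hT]
    by_cases hne : ∃ s₀ : ℝ, y - s₀ • v ∈ ball x r
    · obtain ⟨s₀, hs₀⟩ := hne
      have hzero : ∀ s, s ∉ closedBall s₀ (2 * r) → χ (y - s • v) = 0 := by
        intro s hs
        refine hsupp _ fun h => hs ?_
        rw [mem_ball, dist_eq_norm] at h hs₀
        rw [mem_closedBall, Real.dist_eq]
        calc |s - s₀| = ‖(s - s₀) • v‖ := by rw [norm_smul, hv, mul_one, Real.norm_eq_abs]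
          _ = ‖(y - s₀ • v - x) - (y - s • v - x)‖ := by congr 1; rw [sub_smul]; abel
          _ ≤ 2 * r := (norm_sub_le _ _).trans (by linarith)
      have hle : ∀ s, ‖χ (y - s • v)‖ ≤ (closedBall s₀ (2 * r)).indicator (fun _ => (1 : ℝ)) s := by
        intro s
        by_cases hs : s ∈ closedBall s₀ (2 * r)
        · rw [indicator_of_mem hs, Real.norm_of_nonneg (h01 _).1]; exact (h01 _).2
        · rw [indicator_of_notMem hs, hzero s hs, norm_zero]
      have hi : Integrable ((closedBall s₀ (2 * r)).indicator (fun _ => (1 : ℝ))) volume :=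
        (integrable_indicator_iff measurableSet_closedBall).2
          (integrableOn_const measure_closedBall_lt_top.ne)
      calc _ ≤ ∫ s in Ioc 0 T, (closedBall s₀ (2 * r)).indicator (fun _ => (1 : ℝ)) s :=
            norm_integral_le_of_norm_le hi.integrableOn (ae_of_all _ hle)
        _ ≤ ∫ s, (closedBall s₀ (2 * r)).indicator (fun _ => (1 : ℝ)) s :=
            setIntegral_le_integral hi (ae_of_all _ fun s => indicator_nonneg (by simp) s)
        _ = 4 * r := by
            rw [integral_indicator measurableSet_closedBall]
            simp [Real.volume_real_closedBall (by positivity : 0 ≤ 2 * r)]; ring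
    · push Not at hne
      simp only [fun s => hsupp _ (hne s)]
      simpa using hr.le
  · intro y
    have h1 : HasDerivAt (fun t : ℝ => φ (y + t • v)) (fderiv ℝ φ y v) 0 :=
      (hφC.differentiable one_ne_zero y).hasFDerivAt.hasLineDerivAt v
    have h2 : (fun t : ℝ => φ (y + t • v)) = fun t => ∫ s in (t - T)..t, χ (y + s • v) := by
      ext t
      have := intervalIntegral.integral_comp_sub_left (fun s => χ (y + s • v)) t (a := 0) (b := T)
      rw [sub_zero] at this
      rw [hφ_eq, ← this]
      refine intervalIntegral.integral_congr fun s _ => ?_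
      congr 1; rw [sub_smul]; abel
    have hk : Continuous fun s : ℝ => χ (y + s • v) := by fun_prop
    have hF : ∀ a : ℝ, HasDerivAt (fun t => ∫ s in (0 : ℝ)..t, χ (y + s • v)) (χ (y + a • v)) a :=
      fun a => hk.integral_hasStrictDerivAt 0 a |>.hasDerivAt
    have h3 : HasDerivAt (fun t => ∫ s in (t - T)..t, χ (y + s • v))
        (χ (y + (0 : ℝ) • v) - χ (y + (0 - T) • v)) 0 := by
      have := (hF 0).sub ((hF (0 - T)).comp_sub_const 0 T)
      refine this.congr_of_eventuallyEq (Eventually.of_forall fun t => ?_)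
      exact (intervalIntegral.integral_interval_sub_left (hk.intervalIntegrable _ _)
        (hk.intervalIntegrable _ _)).symm
    rw [h2] at h1
    rw [h1.unique h3]
    simp [sub_eq_add_neg]

lemma integral_mul_le_of_isWeakGrad (hn : 0 < n) {u : En n → ℝ} {g : En n → (En n →L[ℝ] ℝ)}
    (hu : Integrable u) (hg : Integrable fun x => ‖g x‖) (hw : IsWeakGrad u g)
    {χ : En n → ℝ} (hχ : ContDiff ℝ 1 χ) {x : En n} {r : ℝ} (hr : 0 < r)
    (h01 : ∀ y, χ y ∈ Icc (0 : ℝ) 1) (hsupp : ∀ y, y ∉ ball x r → χ y = 0) :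
    ∫ y, u y * χ y ≤ 4 * r * ∫ y, ‖g y‖ := by
  set v : En n := EuclideanSpace.single ⟨0, hn⟩ 1
  have hv : ‖v‖ = 1 := by simp [v]
  have hχn : ∀ y, ‖χ y‖ ≤ 1 := fun y => by
    rw [Real.norm_of_nonneg (h01 y).1]; exact (h01 y).2
  have hint : ∀ w, Integrable fun y => u y * χ (y - w) := fun w =>
    hu.mul_bdd (c := 1) (hχ.continuous.comp (continuous_sub_right w)).aestronglyMeasurable
      (ae_of_all _ fun y => hχn _)
  have hbound : ∀ k : ℕ,
      ∫ y, u y * χ y ≤ 4 * r * (∫ y, ‖g y‖) + ∫ y, u y * χ (y - (k : ℝ) • v) := by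
    intro k
    obtain ⟨φ, hφ, hφc, hφb, hφd⟩ :=
      exists_directional_primitive hχ hr k.cast_nonneg hv h01 hsupp
    have hE := hw φ hφ hφc v
    simp only [hφd, mul_sub] at hE
    have hχ0 : Integrable fun y => u y * χ y := by simpa using hint 0
    rw [integral_sub hχ0 (hint _)] at hE
    have : ‖∫ y, φ y * g y v‖ ≤ ∫ y, 4 * r * ‖g y‖ := by
      refine norm_integral_le_of_norm_le (hg.const_mul _) (ae_of_all _ fun y => ?_)
      rw [norm_mul]
      have := (g y).le_opNorm v
      rw [hv, mul_one] at this
      gcongr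
      exact hφb y
    rw [integral_const_mul] at this
    linarith [neg_le_of_abs_le this]
  have hlim : Tendsto (fun k : ℕ => ∫ y, u y * χ (y - (k : ℝ) • v)) atTop (𝓝 0) := by
    have := tendsto_integral_of_dominated_convergence (μ := volume) (fun y => ‖u y‖)
      (F := fun (k : ℕ) y => u y * χ (y - (k : ℝ) • v)) (f := fun _ => 0)
      (fun k => (hint _).aestronglyMeasurable) hu.norm
      (fun k => ae_of_all _ fun y => by
        rw [norm_mul]; exact mul_le_of_le_one_right (norm_nonneg _) (hχn _))
      (ae_of_all _ fun y => by
        refine tendsto_const_nhds.congr' ?_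
        filter_upwards [tendsto_natCast_atTop_atTop.eventually_gt_atTop (r + ‖y - x‖)] with k hk
        rw [hsupp, mul_zero]
        intro h
        rw [mem_ball, dist_eq_norm] at h
        have : (k : ℝ) ≤ ‖y - x‖ + ‖y - (k : ℝ) • v - x‖ :=
          calc (k : ℝ) = ‖(k : ℝ) • v‖ := by rw [norm_smul, hv, mul_one]; simp
            _ = ‖(y - x) - (y - (k : ℝ) • v - x)‖ := by congr 1; abel
            _ ≤ _ := norm_sub_le _ _
        linarith)
    simpa using this
  have := ge_of_tendsto (hlim.const_add (4 * r * ∫ y, ‖g y‖)) (Eventually.of_forall hbound)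
  simpa using this

/-- A linear isoperimetric inequality for the Sobolev 1-capacity. -/
lemma volume_le_mul_cap1 (hn : 0 < n) {A : Set (En n)} {x : En n} {r : ℝ} (hr : 0 < r)
    (hA : A ⊆ ball x r) : volume A ≤ ENNReal.ofReal (4 * r) * cap1 A := by
  rw [mul_comm, ← ENNReal.div_le_iff_le_mul (by simp [hr]) (Or.inl ENNReal.ofReal_ne_top)]
  refine le_sInf ?_
  rintro c ⟨u, g, hu, hg, hw, ⟨V, hV, hAV, hV1⟩, rfl⟩
  rw [ENNReal.div_le_iff_le_mul (by simp [hr]) (Or.inl ENNReal.ofReal_ne_top), mul_comm,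
    ← ENNReal.ofReal_mul (by positivity)]
  have hWo : IsOpen (V ∩ ball x r) := hV.inter isOpen_ball
  refine (measure_mono (subset_inter hAV hA)).trans ?_
  rw [hWo.measure_eq_iSup_isCompact]
  refine iSup₂_le fun K hK => iSup_le fun hKc => ?_
  obtain ⟨χ, hχ, hχr, hχs, hχ1⟩ := exists_contMDiff_support_eq_eq_one_iff
    (n := 1) (modelWithCornersSelf ℝ (En n)) hWo hKc.isClosed hK
  rw [contMDiff_iff_contDiff] at hχ
  have h01 : ∀ y, χ y ∈ Icc (0 : ℝ) 1 := fun y => hχr (mem_range_self y)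
  have h0 : ∀ y, y ∉ V ∩ ball x r → χ y = 0 := fun y hy => by
    rwa [← hχs, Function.notMem_support] at hy
  have key := integral_mul_le_of_isWeakGrad hn hu hg hw hχ hr h01
    fun y hy => h0 y fun h => hy h.2
  have hcs : HasCompactSupport χ := HasCompactSupport.intro (isCompact_closedBall x r)
    fun y hy => h0 y fun h => hy (ball_subset_closedBall h.2)
  have hχi : Integrable χ := hχ.continuous.integrable_of_hasCompactSupport hcs
  have h1 : volume K ≤ ENNReal.ofReal (∫ y, χ y) := by
    rw [ofReal_integral_eq_lintegral_ofReal hχi (ae_of_all _ fun y => (h01 y).1),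
      ← lintegral_indicator_one hKc.measurableSet]
    refine lintegral_mono fun y => ?_
    by_cases hy : y ∈ K
    · simp [hy, (hχ1 y).1 hy]
    · simp [hy]
  have h2 : ∫ y, χ y ≤ ∫ y, u y * χ y := by
    refine integral_mono hχi (hu.mul_bdd (c := 1) hχ.continuous.aestronglyMeasurable
      (ae_of_all _ fun y => by rw [Real.norm_of_nonneg (h01 y).1]; exact (h01 y).2)) fun y => ?_
    by_cases hy : y ∈ V ∩ ball x r
    · exact le_mul_of_one_le_left (h01 y).1 (hV1 y hy.1)
    · simp [h0 y hy]
  refine h1.trans (ENNReal.ofReal_le_ofReal (h2.trans (key.trans ?_)))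
  have : 0 ≤ ∫ y, |u y| := integral_nonneg fun y => abs_nonneg _
  gcongr
  linarith

lemma ae_summable_and_integrable_tsum {α E : Type*} [MeasurableSpace α] {μ : Measure α}
    [NormedAddCommGroup E] [CompleteSpace E] {F : ℕ → α → E}
    (hF : ∀ k, AEStronglyMeasurable (F k) μ) (hsum : ∑' k, ∫⁻ y, ‖F k y‖ₑ ∂μ ≠ ∞) :
    (∀ᵐ y ∂μ, Summable fun k => F k y) ∧ Integrable (fun y => ∑' k, F k y) μ ∧
      ∫⁻ y, ‖∑' k, F k y‖ₑ ∂μ ≤ ∑' k, ∫⁻ y, ‖F k y‖ₑ ∂μ := by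
  rw [← lintegral_tsum fun k => (hF k).enorm] at hsum ⊢
  have hs : ∀ᵐ y ∂μ, Summable fun k => F k y := by
    filter_upwards [ae_lt_top' (AEMeasurable.tsum fun k => (hF k).enorm) hsum] with y hy
    have : Summable fun k => ‖F k y‖₊ := ENNReal.tsum_coe_ne_top_iff_summable.1 hy.ne
    exact Summable.of_nnnorm this
  have hle : ∫⁻ y, ‖∑' k, F k y‖ₑ ∂μ ≤ ∫⁻ y, ∑' k, ‖F k y‖ₑ ∂μ :=
    lintegral_mono fun y => enorm_tsum_le_tsum_enorm
  refine ⟨hs, ⟨?_, hle.trans_lt hsum.lt_top⟩, hle⟩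
  refine aestronglyMeasurable_of_tendsto_ae atTop
    (f := fun m y => ∑ k ∈ Finset.range m, F k y)
    (fun m => Finset.aestronglyMeasurable_fun_sum _ fun k _ => hF k) ?_
  filter_upwards [hs] with y hy using hy.hasSum.tendsto_sum_nat

lemma isWeakGrad_tsum {u : ℕ → En n → ℝ} (hu : ∀ k, ContDiff ℝ 1 (u k))
    (hc : ∀ k, HasCompactSupport (u k)) (hsu : ∑' k, ∫⁻ y, ‖u k y‖ₑ ≠ ∞)
    (hsd : ∑' k, ∫⁻ y, ‖fderiv ℝ (u k) y‖ₑ ≠ ∞) :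
    IsWeakGrad (fun y => ∑' k, u k y) (fun y => ∑' k, fderiv ℝ (u k) y) := by
  intro φ hφ hφc v
  have hcont : ∀ k, Continuous (u k) := fun k => (hu k).continuous
  have hcontd : ∀ k, Continuous (fderiv ℝ (u k)) := fun k => (hu k).continuous_fderiv one_ne_zero
  have hcd : ∀ k, Continuous fun y => fderiv ℝ (u k) y v := fun k => (hcontd k).clm_apply continuous_const
  have hφd : Continuous fun y => fderiv ℝ φ y v :=
    (hφ.continuous_fderiv one_ne_zero).clm_apply continuous_const
  obtain ⟨C, hC⟩ := hφ.continuous.bounded_above_of_compact_support hφc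
  obtain ⟨D, hD⟩ := (hφ.continuous_fderiv one_ne_zero).bounded_above_of_compact_support
    (hφc.fderiv ℝ)
  have hparts : ∀ k, ∫ y, u k y * fderiv ℝ φ y v = - ∫ y, φ y * fderiv ℝ (u k) y v := by
    intro k
    rw [integral_mul_fderiv_eq_neg_fderiv_mul_of_integrable]
    · simp only [mul_comm]
    · exact ((hcd k).mul hφ.continuous).integrable_of_hasCompactSupport hφc.mul_left
    · exact ((hcont k).mul hφd).integrable_of_hasCompactSupport (hc k).mul_right
    · exact ((hcont k).mul hφ.continuous).integrable_of_hasCompactSupport hφc.mul_left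
    · exact fun y _ => (hu k).differentiable one_ne_zero y
    · exact fun y _ => hφ.differentiable one_ne_zero y
  have h1 : ∑' k, ∫⁻ y, ‖u k y * fderiv ℝ φ y v‖ₑ ≠ ∞ := by
    have hle : ∑' k, ∫⁻ y, ‖u k y * fderiv ℝ φ y v‖ₑ ≤
        (∑' k, ∫⁻ y, ‖u k y‖ₑ) * ENNReal.ofReal (D * ‖v‖) := by
      rw [← ENNReal.tsum_mul_right]
      refine ENNReal.tsum_le_tsum fun k => ?_
      rw [← lintegral_mul_const _ (hcont k).enorm.measurable]
      refine lintegral_mono fun y => ?_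
      rw [enorm_mul]
      gcongr
      rw [← ofReal_norm]
      refine ENNReal.ofReal_le_ofReal (((fderiv ℝ φ y).le_opNorm v).trans ?_)
      gcongr
      exact hD y
    exact (hle.trans_lt (ENNReal.mul_lt_top hsu.lt_top ENNReal.ofReal_lt_top)).ne
  have h2 : ∑' k, ∫⁻ y, ‖φ y * fderiv ℝ (u k) y v‖ₑ ≠ ∞ := by
    have hle : ∑' k, ∫⁻ y, ‖φ y * fderiv ℝ (u k) y v‖ₑ ≤
        (∑' k, ∫⁻ y, ‖fderiv ℝ (u k) y‖ₑ) * ENNReal.ofReal (C * ‖v‖) := by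
      rw [← ENNReal.tsum_mul_right]
      refine ENNReal.tsum_le_tsum fun k => ?_
      rw [← lintegral_mul_const _ (hcontd k).enorm.measurable]
      refine lintegral_mono fun y => ?_
      rw [← ofReal_norm, ← ofReal_norm, ← ENNReal.ofReal_mul (norm_nonneg _), norm_mul]
      refine ENNReal.ofReal_le_ofReal ?_
      calc ‖φ y‖ * ‖fderiv ℝ (u k) y v‖ ≤ C * (‖fderiv ℝ (u k) y‖ * ‖v‖) := by
            gcongr
            · exact (norm_nonneg _).trans (hC y)
            · exact hC y
            · exact (fderiv ℝ (u k) y).le_opNorm v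
        _ = _ := by ring
    exact (hle.trans_lt (ENNReal.mul_lt_top hsd.lt_top ENNReal.ofReal_lt_top)).ne
  have hs := (ae_summable_and_integrable_tsum (fun k => (hcontd k).aestronglyMeasurable) hsd).1
  calc ∫ y, (∑' k, u k y) * fderiv ℝ φ y v = ∫ y, ∑' k, u k y * fderiv ℝ φ y v := by
        simp only [_root_.tsum_mul_right]
    _ = ∑' k, ∫ y, u k y * fderiv ℝ φ y v :=
        integral_tsum (fun k => ((hcont k).mul hφd).aestronglyMeasurable) h1
    _ = - ∑' k, ∫ y, φ y * fderiv ℝ (u k) y v := by simp only [hparts, tsum_neg]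
    _ = - ∫ y, ∑' k, φ y * fderiv ℝ (u k) y v := by
        congr 1
        exact (integral_tsum (fun k => (hφ.continuous.mul (hcd k)).aestronglyMeasurable) h2).symm
    _ = - ∫ y, φ y * (∑' k, fderiv ℝ (u k) y) v := by
        congr 1
        refine integral_congr_ae ?_
        filter_upwards [hs] with y hy
        rw [_root_.tsum_mul_left]
        congr 1
        exact ((ContinuousLinearMap.apply ℝ ℝ v).hasSum hy.hasSum).tsum_eq

/-- Countable subadditivity of the capacity for competitors of class `C¹`. -/
lemma cap1_le_tsum {A : Set (En n)} {u : ℕ → En n → ℝ} (hu : ∀ k, ContDiff ℝ 1 (u k))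
    (hc : ∀ k, HasCompactSupport (u k)) (h0 : ∀ k y, 0 ≤ u k y)
    (hA : ∀ y ∈ A, ∃ k, 1 < u k y) {c : ℕ → ℝ≥0∞}
    (hb : ∀ k, ∫⁻ y, ‖u k y‖ₑ + ‖fderiv ℝ (u k) y‖ₑ ≤ c k) :
    cap1 A ≤ ∑' k, c k := by
  rcases eq_or_ne (∑' k, c k) ∞ with htop | htop
  · rw [htop]; exact le_top
  have hcont : ∀ k, Continuous (u k) := fun k => (hu k).continuous
  have hcontd : ∀ k, Continuous (fderiv ℝ (u k)) := fun k => (hu k).continuous_fderiv one_ne_zero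
  have hui : ∀ k, Integrable (u k) := fun k => (hcont k).integrable_of_hasCompactSupport (hc k)
  have hdi : ∀ k, Integrable (fderiv ℝ (u k)) := fun k =>
    (hcontd k).integrable_of_hasCompactSupport ((hc k).fderiv ℝ)
  have hsum : ∑' k, ((∫⁻ y, ‖u k y‖ₑ) + ∫⁻ y, ‖fderiv ℝ (u k) y‖ₑ) ≤ ∑' k, c k := by
    refine ENNReal.tsum_le_tsum fun k => ?_
    rw [← lintegral_add_left (hcont k).enorm.measurable]
    exact hb k
  rw [ENNReal.tsum_add] at hsum
  have hsu : ∑' k, ∫⁻ y, ‖u k y‖ₑ ≠ ∞ := ((le_self_add.trans hsum).trans_lt htop.lt_top).ne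
  have hsd : ∑' k, ∫⁻ y, ‖fderiv ℝ (u k) y‖ₑ ≠ ∞ :=
    ((le_add_self.trans hsum).trans_lt htop.lt_top).ne
  obtain ⟨hs, hI, hle⟩ :=
    ae_summable_and_integrable_tsum (fun k => (hcont k).aestronglyMeasurable) hsu
  obtain ⟨-, hId, hled⟩ :=
    ae_summable_and_integrable_tsum (fun k => (hcontd k).aestronglyMeasurable) hsd
  classical
  set U : En n → ℝ := fun y => if Summable fun k => u k y then ∑' k, u k y else 1
  have hUS : U =ᵐ[volume] fun y => ∑' k, u k y := by
    filter_upwards [hs] with y hy using if_pos hy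
  have hmem : ENNReal.ofReal ((∫ x, |U x|) + ∫ x, ‖∑' k, fderiv ℝ (u k) x‖) ∈
      {c : ℝ≥0∞ | ∃ u : En n → ℝ, ∃ g : En n → (En n →L[ℝ] ℝ),
        Integrable u ∧ Integrable (fun x => ‖g x‖) ∧ IsWeakGrad u g ∧
        (∃ V : Set (En n), IsOpen V ∧ A ⊆ V ∧ ∀ x ∈ V, 1 ≤ u x) ∧
        c = ENNReal.ofReal ((∫ x, |u x|) + ∫ x, ‖g x‖)} := by
    refine ⟨U, fun y => ∑' k, fderiv ℝ (u k) y, hI.congr hUS.symm, hId.norm, ?_,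
      ⟨⋃ k, {y | 1 < u k y}, isOpen_iUnion fun k => isOpen_lt continuous_const (hcont k),
        fun y hy => mem_iUnion.2 (hA y hy), fun y hy => ?_⟩, rfl⟩
    · intro φ hφ hφc v
      rw [← isWeakGrad_tsum hu hc hsu hsd φ hφ hφc v]
      refine integral_congr_ae ?_
      filter_upwards [hUS] with y hy
      rw [hy]
    · obtain ⟨k, hk⟩ := mem_iUnion.1 hy
      simp only [U]
      split_ifs with hsy
      · exact (le_of_lt hk).trans (hsy.le_tsum k fun j _ => h0 j y)
      · exact le_rfl
  refine (sInf_le hmem).trans (ENNReal.ofReal_add_le.trans (le_trans ?_ hsum))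
  gcongr
  · have : ∫ x, |U x| = ∫ x, ‖∑' k, u k x‖ :=
      integral_congr_ae (by filter_upwards [hUS] with y hy; rw [hy, Real.norm_eq_abs])
    rw [this, ofReal_integral_norm_eq_lintegral_enorm hI]
    exact hle
  · rw [ofReal_integral_norm_eq_lintegral_enorm hId]
    exact hled

lemma exists_smooth_truncation (n : ℕ) : ∃ Φ : En n → ℝ, ContDiff ℝ 1 Φ ∧ (∀ w, 0 ≤ Φ w) ∧
    (∀ w, Φ w ≤ ‖w‖) ∧ (∀ w, ‖fderiv ℝ Φ w‖ ≤ 2) ∧ ∀ w, 1 < ‖w‖ → 1 < Φ w := by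
  have hpos : ∀ w : En n, 0 < 1 + ‖w‖ ^ 2 := fun w => by positivity
  refine ⟨fun w => 2 - 2 * (1 + ‖w‖ ^ 2)⁻¹, ?_, fun w => ?_, fun w => ?_, fun w => ?_,
    fun w hw => ?_⟩
  · exact contDiff_const.sub (contDiff_const.mul
      ((contDiff_const.add (contDiff_norm_sq ℝ)).inv fun w => (hpos w).ne'))
  · have : (1 + ‖w‖ ^ 2)⁻¹ ≤ 1 := inv_le_one_of_one_le₀ (by nlinarith [norm_nonneg w])
    linarith
  · have h := hpos w
    have : 2 - 2 * (1 + ‖w‖ ^ 2)⁻¹ = 2 * ‖w‖ ^ 2 / (1 + ‖w‖ ^ 2) := by field_simp; ring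
    change 2 - 2 * (1 + ‖w‖ ^ 2)⁻¹ ≤ ‖w‖
    rw [this, div_le_iff₀ h]
    nlinarith [mul_nonneg (norm_nonneg w) (sq_nonneg (‖w‖ - 1))]
  · have hd : HasFDerivAt (fun w : En n => 2 - 2 * (1 + ‖w‖ ^ 2)⁻¹)
        ((4 * ((1 + ‖w‖ ^ 2) ^ 2)⁻¹) • innerSL ℝ w) w := by
      have h1 : HasFDerivAt (fun w : En n => 1 + ‖w‖ ^ 2) (2 • innerSL ℝ w) w :=
        (hasStrictFDerivAt_norm_sq w).hasFDerivAt.const_add 1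
      have h2 := ((hasDerivAt_inv (hpos w).ne').comp_hasFDerivAt w h1).const_mul (2 : ℝ) |>.const_sub (2 : ℝ)
      refine h2.congr_fderiv ?_
      ext v
      simp
      ring
    rw [hd.fderiv, norm_smul, innerSL_apply_norm, Real.norm_of_nonneg (by positivity)]
    rw [mul_assoc, inv_mul_eq_div, ← mul_div_assoc, div_le_iff₀ (by positivity)]
    nlinarith [sq_nonneg (‖w‖ - 1), norm_nonneg w, sq_nonneg (‖w‖ ^ 2)]
  · have : (1 + ‖w‖ ^ 2)⁻¹ < 2⁻¹ := inv_strictAnti₀ (by norm_num) (by nlinarith)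
    change 1 < 2 - 2 * (1 + ‖w‖ ^ 2)⁻¹
    linarith

/-- Capacitary competitor for a superlevel set of a `C¹` map on a ball. -/
lemma exists_competitor (n : ℕ) : ∃ C : ℝ, 0 ≤ C ∧ ∀ (H : En n → En n) (_ : ContDiff ℝ 1 H)
    (x : En n) (ρ a : ℝ) (_ : 0 < ρ) (_ : 0 < a), ∃ u : En n → ℝ, ContDiff ℝ 1 u ∧
      HasCompactSupport u ∧ (∀ y, 0 ≤ u y) ∧ (∀ y ∈ closedBall x ρ, 1 < a * ‖H y‖ → 1 < u y) ∧
      ∫⁻ y, ‖u y‖ₑ + ‖fderiv ℝ u y‖ₑ ≤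
        ENNReal.ofReal (2 * a) * (∫⁻ y in closedBall x (2 * ρ), ‖fderiv ℝ H y‖ₑ) +
        ENNReal.ofReal (a * (1 + C / ρ)) * ∫⁻ y in closedBall x (2 * ρ), ‖H y‖ₑ := by
  obtain ⟨Φ, hΦ, hΦ0, hΦn, hΦd, hΦ1⟩ := exists_smooth_truncation n
  let ψ : ContDiffBump (0 : En n) := ⟨1, 2, one_pos, one_lt_two⟩
  have hψ : ContDiff ℝ 1 ψ := ψ.contDiff
  obtain ⟨C, hC⟩ := (hψ.continuous_fderiv one_ne_zero).bounded_above_of_compact_support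
    (ψ.hasCompactSupport.fderiv ℝ)
  refine ⟨C, (norm_nonneg _).trans (hC 0), fun H hH x ρ a hρ ha => ?_⟩
  set S : En n → En n := fun y => ρ⁻¹ • (y - x)
  have hS : ∀ y, HasFDerivAt S (ρ⁻¹ • ContinuousLinearMap.id ℝ (En n)) y := fun y =>
    ((hasFDerivAt_id y).sub_const x).const_smul ρ⁻¹
  have hSC : ContDiff ℝ 1 S := (contDiff_id.sub contDiff_const).const_smul ρ⁻¹
  have hSn : ∀ y, ‖S y‖ = ρ⁻¹ * ‖y - x‖ := fun y => by
    rw [norm_smul, Real.norm_of_nonneg (by positivity)]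
  set u : En n → ℝ := fun y => Φ (a • H y) * ψ (S y) with hu
  have huC : ContDiff ℝ 1 u := (hΦ.comp (hH.const_smul a)).mul (hψ.comp hSC)
  have hout : ∀ y, y ∉ closedBall x (2 * ρ) → u y = 0 := fun y hy => by
    rw [mem_closedBall, dist_eq_norm, not_le] at hy
    have : ψ (S y) = 0 := ψ.zero_of_le_dist (by
      rw [dist_zero_right, hSn, inv_mul_eq_div, le_div_iff₀ hρ]; exact hy.le)
    simp [hu, this]
  have hts : tsupport u ⊆ closedBall x (2 * ρ) :=
    closure_minimal (fun y hy => by_contra fun h => hy (hout y h)) isClosed_closedBall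
  have hus : HasCompactSupport u := HasCompactSupport.intro (isCompact_closedBall _ _) hout
  refine ⟨u, huC, hus, fun y => mul_nonneg (hΦ0 _) ψ.nonneg, fun y hy h => ?_, ?_⟩
  · have : ψ (S y) = 1 := ψ.one_of_mem_closedBall (by
      rw [mem_closedBall, dist_eq_norm] at hy
      rw [mem_closedBall, dist_zero_right, hSn, inv_mul_eq_div]
      exact (div_le_one hρ).2 hy)
    rw [hu]
    simp only [this, mul_one]
    exact hΦ1 _ (by rwa [norm_smul, Real.norm_of_nonneg ha.le])
  have haH : ∀ y, Φ (a • H y) ≤ a * ‖H y‖ := fun y =>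
    (hΦn _).trans_eq (by rw [norm_smul, Real.norm_of_nonneg ha.le])
  have hun : ∀ y, ‖u y‖ ≤ a * ‖H y‖ := fun y => by
    rw [Real.norm_of_nonneg (mul_nonneg (hΦ0 _) ψ.nonneg)]
    exact (mul_le_of_le_one_right (hΦ0 _) ψ.le_one).trans (haH y)
  have hud : ∀ y, ‖fderiv ℝ u y‖ ≤ 2 * a * ‖fderiv ℝ H y‖ + a * (C / ρ) * ‖H y‖ := fun y => by
    have hHd := (hH.differentiable one_ne_zero y).hasFDerivAt
    have h1 : HasFDerivAt (fun y => Φ (a • H y)) _ y :=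
      (hΦ.differentiable one_ne_zero (a • H y)).hasFDerivAt.comp y (hHd.const_smul a)
    have h2 : HasFDerivAt (fun y => ψ (S y)) _ y :=
      (hψ.differentiable one_ne_zero (S y)).hasFDerivAt.comp y (hS y)
    rw [show fderiv ℝ u y = _ from (h1.mul h2).fderiv, add_comm]
    refine (norm_add_le _ _).trans (add_le_add ?_ ?_)
    · rw [norm_smul, Real.norm_of_nonneg ψ.nonneg]
      refine (mul_le_of_le_one_left (norm_nonneg _) ψ.le_one).trans ?_
      refine (ContinuousLinearMap.opNorm_comp_le _ _).trans ?_
      rw [norm_smul, Real.norm_of_nonneg ha.le, mul_assoc]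
      gcongr
      exact hΦd _
    · rw [norm_smul, Real.norm_of_nonneg (hΦ0 _)]
      calc _ ≤ a * ‖H y‖ * (C * ρ⁻¹) := by
            refine mul_le_mul (haH y) ?_ (norm_nonneg _) (by positivity)
            refine (ContinuousLinearMap.opNorm_comp_le _ _).trans ?_
            refine mul_le_mul (hC _) ?_ (norm_nonneg _) ((norm_nonneg _).trans (hC 0))
            rw [norm_smul, Real.norm_of_nonneg (by positivity)]
            exact mul_le_of_le_one_right (by positivity) ContinuousLinearMap.norm_id_le
        _ = _ := by ring
  have hC0 : 0 ≤ C := (norm_nonneg _).trans (hC 0)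
  have hHe : Measurable fun y => ‖H y‖ₑ := hH.continuous.enorm.measurable
  have hHde : Measurable fun y => ‖fderiv ℝ H y‖ₑ :=
    (hH.continuous_fderiv one_ne_zero).enorm.measurable
  rw [← lintegral_const_mul _ hHe, ← lintegral_const_mul _ hHde,
    ← lintegral_add_left (hHde.const_mul _), ← lintegral_indicator measurableSet_closedBall]
  refine lintegral_mono fun y => ?_
  by_cases hy : y ∈ closedBall x (2 * ρ)
  · rw [indicator_of_mem hy]
    simp only [← ofReal_norm]
    rw [← ENNReal.ofReal_add (norm_nonneg _) (norm_nonneg _),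
      ← ENNReal.ofReal_mul (by positivity), ← ENNReal.ofReal_mul (by positivity),
      ← ENNReal.ofReal_add (by positivity) (by positivity)]
    refine ENNReal.ofReal_le_ofReal ?_
    linarith [hun y, hud y]
  · have h1 : fderiv ℝ u y = 0 := by
      by_contra h
      exact hy (hts (support_fderiv_subset ℝ h))
    rw [indicator_of_notMem hy, h1, hout y hy, enorm_zero, zero_add, ← ofReal_norm, norm_zero,
      ENNReal.ofReal_zero]

/-- Capacity of the set where `h` is not small of first order, from smooth approximations. -/
lemma exists_cap1_superlevel_le (hn : 2 ≤ n) : ∃ C : ℝ, 0 ≤ C ∧ ∀ (h : En n → En n) (x : En n)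
    (r η ε : ℝ) (_ : 0 < r) (_ : r ≤ 1) (_ : 0 ≤ η) (_ : 0 < ε)
    (_ : ∀ ρ τ : ℝ, 0 < ρ → ρ ≤ r → 0 < τ → ∃ H : En n → En n, ContDiff ℝ 1 H ∧
      (∀ y ∈ closedBall x ρ, ‖H y - h y‖ ≤ τ) ∧
      ∫⁻ y in closedBall x (2 * ρ), ‖fderiv ℝ H y‖ₑ ≤ ENNReal.ofReal (η * ρ ^ n) ∧
      ∫⁻ y in closedBall x (2 * ρ), ‖H y‖ₑ ≤ ENNReal.ofReal (η * ρ ^ (n + 1))),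
    cap1 ({y | y ≠ x ∧ ε * ‖y - x‖ ≤ ‖h y‖} ∩ ball x r) ≤
      ENNReal.ofReal (C * (η / ε) * r ^ (n - 1)) := by
  obtain ⟨C, hC, hcomp⟩ := exists_competitor n
  refine ⟨2 * (24 + 8 * C), by positivity, fun h x r η ε hr hr1 hη hε hH => ?_⟩
  set ρ : ℕ → ℝ := fun k => r * (1 / 2) ^ k with hρdef
  have hρ : ∀ k, 0 < ρ k := fun k => by positivity
  have hρr : ∀ k, ρ k ≤ r := fun k =>
    mul_le_of_le_one_right hr.le (pow_le_one₀ (by norm_num) (by norm_num))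
  choose H hHC hHh hHd hHi using fun k =>
    hH (ρ k) (ε * ρ k / 4) (hρ k) (hρr k) (by have := hρ k; positivity)
  choose u huC hus hu0 hu1 hub using fun k =>
    hcomp (H k) (hHC k) x (ρ k) (8 / (ε * ρ k)) (hρ k) (by have := hρ k; positivity)
  have hsum : ∀ k, ∫⁻ y, ‖u k y‖ₑ + ‖fderiv ℝ (u k) y‖ₑ ≤
      ((((24 + 8 * C) * (η / ε) * r ^ (n - 1)).toNNReal * (1 / 2) ^ k : ℝ≥0) : ℝ≥0∞) := by
    intro k
    have hk := hρ k
    refine (hub k).trans ((add_le_add (mul_le_mul_right (hHd k) _)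
      (mul_le_mul_right (hHi k) _)).trans ?_)
    rw [← ENNReal.ofReal_mul (by positivity), ← ENNReal.ofReal_mul (by positivity),
      ← ENNReal.ofReal_add (by positivity) (by positivity)]
    have h2 : (((1 / 2) ^ k : ℝ≥0) : ℝ≥0∞) = ENNReal.ofReal ((1 / 2) ^ k) := by
      rw [ENNReal.ofReal, Real.toNNReal_pow (by norm_num)]
      congr 2
      ext
      simp
    rw [ENNReal.coe_mul, h2, ← ENNReal.ofReal, ← ENNReal.ofReal_mul (by positivity)]
    refine ENNReal.ofReal_le_ofReal ?_
    obtain ⟨m, rfl⟩ : ∃ m, n = m + 2 := ⟨n - 2, by omega⟩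
    have h3 : ρ k ^ (m + 1) ≤ r ^ (m + 1) * (1 / 2) ^ k := by
      rw [hρdef, mul_pow, pow_succ ((1 / 2 : ℝ) ^ k) m]
      refine mul_le_mul_of_nonneg_left (mul_le_of_le_one_left (by positivity) ?_) (by positivity)
      exact pow_le_one₀ (by positivity) (pow_le_one₀ (by norm_num) (by norm_num))
    have h4 : 2 * (8 / (ε * ρ k)) * (η * ρ k ^ (m + 2)) +
        8 / (ε * ρ k) * (1 + C / ρ k) * (η * ρ k ^ (m + 2 + 1)) =
        (16 + 8 * ρ k + 8 * C) * (η / ε) * ρ k ^ (m + 1) := by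
      field_simp
      ring
    rw [h4, show m + 2 - 1 = m + 1 from rfl, mul_assoc _ (r ^ (m + 1))]
    have := (hρr k).trans hr1
    gcongr
    linarith
  have hcov : ∀ y ∈ {y | y ≠ x ∧ ε * ‖y - x‖ ≤ ‖h y‖} ∩ ball x r, ∃ k, 1 < u k y := by
    rintro y ⟨⟨hyx, hy⟩, hyr⟩
    rw [mem_ball, dist_eq_norm] at hyr
    have hpos : 0 < ‖y - x‖ := norm_pos_iff.2 (sub_ne_zero.2 hyx)
    obtain ⟨k, hk1, hk2⟩ := exists_nat_pow_near_of_lt_one (x := ‖y - x‖ / r) (y := (1 / 2 : ℝ))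
      (by positivity) ((div_le_one hr).2 hyr.le) (by norm_num) (by norm_num)
    rw [lt_div_iff₀ hr] at hk1
    rw [div_le_iff₀ hr] at hk2
    have hk := hρ k
    have hym : y ∈ closedBall x (ρ k) := by
      rw [mem_closedBall, dist_eq_norm, hρdef]
      linarith
    refine ⟨k, hu1 k y hym ?_⟩
    have h1 := hHh k y hym
    have h2 := norm_sub_norm_le (h y) (H k y)
    rw [norm_sub_rev] at h1
    have h3 : ρ k / 2 < ‖y - x‖ := by
      rw [hρdef]
      rw [pow_succ] at hk1
      linarith
    have h4 : ε * (ρ k / 2) ≤ ε * ‖y - x‖ := by gcongr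
    rw [div_mul_eq_mul_div, lt_div_iff₀ (by positivity)]
    have : 0 < ε * ρ k := by positivity
    linarith
  refine (cap1_le_tsum huC hus hu0 hcov hsum).trans ?_
  simp only [ENNReal.coe_mul]
  rw [ENNReal.tsum_mul_left]
  have h5 : ∑' k : ℕ, (((1 / 2) ^ k : ℝ≥0) : ℝ≥0∞) = 2 := by
    have : ∀ k : ℕ, (((1 / 2) ^ k : ℝ≥0) : ℝ≥0∞) = (2⁻¹ : ℝ≥0∞) ^ k := fun k => by
      simp [ENNReal.inv_pow]
    simp_rw [this]
    rw [ENNReal.tsum_geometric, ENNReal.one_sub_inv_two, inv_inv]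
  rw [h5, ← ENNReal.ofReal, ← ENNReal.ofReal_ofNat 2, ← ENNReal.ofReal_mul (by positivity)]
  exact ENNReal.ofReal_le_ofReal (by ring_nf; rfl)

/-- The directional derivative of a mollification is the mollification of the weak derivative. -/
lemma fderiv_convolution_of_weak {Ω S : Set (En n)} {f : En n → En n} {w : En n → En n} {v : En n}
    (hΩ : MeasurableSet Ω) (hS : MeasurableSet S) (hSΩ : S ⊆ Ω) (hf : IntegrableOn f S)
    (hw : ∀ φ : En n → ℝ, ContDiff ℝ 1 φ → HasCompactSupport φ → tsupport φ ⊆ Ω →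
      ∫ y in Ω, (fderiv ℝ φ y v) • f y = - ∫ y in Ω, φ y • w y)
    {k : En n → ℝ} (hk : ContDiff ℝ 1 k) (hks : HasCompactSupport k) {z : En n}
    (hz : tsupport (fun y => k (z - y)) ⊆ S) :
    fderiv ℝ (convolution k (S.indicator f) (ContinuousLinearMap.lsmul ℝ ℝ) volume) z v =
      ∫ y in Ω, k (z - y) • w y := by
  set F := S.indicator f
  have hF : LocallyIntegrable F volume := ((integrable_indicator_iff hS).2 hf).locallyIntegrable
  have hd := hks.hasFDerivAt_convolution_left (ContinuousLinearMap.lsmul ℝ ℝ) hk hF z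
  have hce := (hks.fderiv ℝ).convolutionExists_left
    ((ContinuousLinearMap.lsmul ℝ ℝ : ℝ →L[ℝ] En n →L[ℝ] En n).precompL (En n))
    (hk.continuous_fderiv one_ne_zero) hF z
  rw [hd.fderiv, convolution_def, ContinuousLinearMap.integral_apply hce]
  simp only [ContinuousLinearMap.precompL_apply, ContinuousLinearMap.lsmul_apply]
  set φ : En n → ℝ := fun y => k (z - y) with hφ
  have hφC : ContDiff ℝ 1 φ := hk.comp (contDiff_const.sub contDiff_id)
  have hφs : HasCompactSupport φ := hks.comp_homeomorph (Homeomorph.subLeft z)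
  have hφd : ∀ y, fderiv ℝ φ y v = - fderiv ℝ k (z - y) v := fun y => by
    have h1 : HasFDerivAt φ _ y := (hk.differentiable one_ne_zero (z - y)).hasFDerivAt.comp y
      ((hasFDerivAt_id y).const_sub z)
    rw [h1.fderiv]
    simp
  have h := hw φ hφC hφs (hz.trans hSΩ)
  rw [← neg_eq_iff_eq_neg] at h
  rw [← h, ← integral_neg, ← integral_indicator hΩ,
    ← integral_sub_left_eq_self (fun t => (fderiv ℝ k t v) • F (z - t)) volume z]
  congr 1
  ext1 y
  rw [_root_.sub_sub_cancel]
  by_cases hy : y ∈ S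
  · simp [F, hy, hSΩ hy, hφd]
  · have : fderiv ℝ φ y = 0 := by
      by_contra h
      exact hy (hz (support_fderiv_subset ℝ h))
    rw [show F y = 0 from indicator_of_notMem hy f, smul_zero, eq_comm, indicator_apply_eq_zero]
    intro _
    rw [this, zero_apply, zero_smul, neg_zero]

/-- Average of a mollification over small balls around a fixed centre. -/
lemma lintegral_conv_le {x : En n} {N K : En n → ℝ≥0∞} {ρ₀ δ s : ℝ} {η : ℝ≥0∞} (hδ : 0 < δ)
    (hs : 0 < s) (hN : AEMeasurable N) (hK : Measurable K)
    (hK1 : ∫⁻ y, K y = 1) (hK0 : ∀ y, y ∉ closedBall 0 δ → K y = 0)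
    (hKb : ∀ y, K y ≤ (volume (closedBall (0 : En n) (δ / 2)))⁻¹)
    (hNρ : ∀ ρ, 0 < ρ → ρ ≤ ρ₀ → ∫⁻ y in closedBall x ρ, N y ≤ η * volume (closedBall x ρ))
    (h1 : s + δ ≤ ρ₀) (h2 : 2 * δ ≤ ρ₀) :
    ∫⁻ z in closedBall x s, ∫⁻ y, K (z - y) * N y ≤ 4 ^ n * η * volume (closedBall x s) := by
  have hvol : ∀ (c : ℝ) (y : En n), 0 < c → volume (closedBall y c) =
      ENNReal.ofReal c ^ n * volume (closedBall (0 : En n) 1) := fun c y hc => by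
    rw [Measure.addHaar_closedBall' _ _ hc.le, finrank_euclideanSpace_fin,
      ENNReal.ofReal_pow hc.le]
  have hb0 : volume (closedBall (0 : En n) 1) ≠ 0 :=
    (measure_closedBall_pos volume _ one_pos).ne'
  have hbt : volume (closedBall (0 : En n) 1) ≠ ∞ := measure_closedBall_lt_top.ne
  rcases le_or_gt δ s with hsδ | hsδ
  · rw [lintegral_lintegral_swap]
    · calc ∫⁻ y, ∫⁻ z in closedBall x s, K (z - y) * N y
          ≤ ∫⁻ y in closedBall x (s + δ), N y := by
            rw [← lintegral_indicator measurableSet_closedBall]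
            refine lintegral_mono fun y => ?_
            by_cases hy : y ∈ closedBall x (s + δ)
            · rw [indicator_of_mem hy, lintegral_mul_const _ (by fun_prop)]
              refine mul_le_of_le_one_left zero_le (?_ : _ ≤ (1 : ℝ≥0∞))
              refine (setLIntegral_le_lintegral _ _).trans ?_
              rw [lintegral_sub_right_eq_self K, hK1]
            · rw [indicator_of_notMem hy, nonpos_iff_eq_zero]
              refine setLIntegral_eq_zero measurableSet_closedBall fun z hz => ?_
              have : K (z - y) = 0 := hK0 _ fun h => hy (by
                rw [mem_closedBall, dist_eq_norm] at *
                rw [sub_zero, norm_sub_rev] at h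
                have := norm_add_le (y - z) (z - x)
                rw [sub_add_sub_cancel] at this
                linarith)
              simp [this]
        _ ≤ η * volume (closedBall x (s + δ)) := hNρ _ (by linarith) h1
        _ ≤ η * (4 ^ n * volume (closedBall x s)) := by
            gcongr
            rw [hvol _ _ (by linarith), hvol _ _ hs, ← mul_assoc, ← mul_pow]
            gcongr
            rw [← ENNReal.ofReal_ofNat 4, ← ENNReal.ofReal_mul (by norm_num)]
            exact ENNReal.ofReal_le_ofReal (by linarith)
        _ = _ := by ring
    · refine AEMeasurable.mul (by fun_prop) ?_
      exact hN.comp_quasiMeasurePreserving Measure.quasiMeasurePreserving_snd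
  · have hpt : ∀ z ∈ closedBall x s, ∫⁻ y, K (z - y) * N y ≤ 4 ^ n * η := by
      intro z hz
      calc ∫⁻ y, K (z - y) * N y
          ≤ ∫⁻ y in closedBall x (2 * δ), (volume (closedBall (0 : En n) (δ / 2)))⁻¹ * N y := by
            rw [← lintegral_indicator measurableSet_closedBall]
            refine lintegral_mono fun y => ?_
            by_cases hy : y ∈ closedBall x (2 * δ)
            · rw [indicator_of_mem hy]
              gcongr
              exact hKb _
            · have : K (z - y) = 0 := hK0 _ fun h => hy (by
                rw [mem_closedBall, dist_eq_norm] at *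
                rw [sub_zero, norm_sub_rev] at h
                have := norm_add_le (y - z) (z - x)
                rw [sub_add_sub_cancel] at this
                linarith)
              simp [this]
        _ = (volume (closedBall (0 : En n) (δ / 2)))⁻¹ * ∫⁻ y in closedBall x (2 * δ), N y :=
            lintegral_const_mul'' _ hN.restrict
        _ ≤ (volume (closedBall (0 : En n) (δ / 2)))⁻¹ * (η * volume (closedBall x (2 * δ))) := by
            gcongr
            exact hNρ _ (by linarith) h2
        _ = 4 ^ n * η * ((volume (closedBall (0 : En n) (δ / 2)))⁻¹ *
              volume (closedBall (0 : En n) (δ / 2))) := by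
            have : volume (closedBall x (2 * δ)) =
                4 ^ n * volume (closedBall (0 : En n) (δ / 2)) := by
              rw [hvol (2 * δ) _ (by linarith), hvol (δ / 2) _ (by linarith), ← mul_assoc,
                ← mul_pow, ← ENNReal.ofReal_ofNat 4, ← ENNReal.ofReal_mul (by norm_num),
                show 4 * (δ / 2) = 2 * δ by ring]
            rw [this]
            ring
        _ = _ := by
            rw [ENNReal.inv_mul_cancel (measure_closedBall_pos volume _ (by linarith)).ne'
              measure_closedBall_lt_top.ne, mul_one]
    calc _ ≤ ∫⁻ z in closedBall x s, 4 ^ n * η :=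
          setLIntegral_mono measurable_const hpt
      _ = _ := by rw [setLIntegral_const]

lemma setLIntegral_comp_homothety {G : En n → ℝ≥0∞} (hG : Measurable G) (x : En n) {t r : ℝ}
    (ht : 0 < t) :
    ∫⁻ y in closedBall x r, G (x + t • (y - x)) =
      ENNReal.ofReal (t ^ n)⁻¹ * ∫⁻ y in closedBall x (t * r), G y := by
  set P : En n → ℝ≥0∞ := fun u => (closedBall x (t * r)).indicator G (x + u)
  have hP : Measurable P :=
    (hG.indicator measurableSet_closedBall).comp (measurable_const_add x)
  calc _ = ∫⁻ y, P (t • (y - x)) := by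
        rw [← lintegral_indicator measurableSet_closedBall]
        congr 1
        ext1 y
        have : y ∈ closedBall x r ↔ x + t • (y - x) ∈ closedBall x (t * r) := by
          rw [mem_closedBall, mem_closedBall, dist_eq_norm, dist_eq_norm, add_sub_cancel_left,
            norm_smul, Real.norm_of_nonneg ht.le, mul_le_mul_iff_right₀ ht]
        by_cases hy : y ∈ closedBall x r
        · simp only [P]
          rw [indicator_of_mem hy, indicator_of_mem (this.1 hy)]
        · simp only [P]
          rw [indicator_of_notMem hy, indicator_of_notMem fun h => hy (this.2 h)]
    _ = ∫⁻ y, P (t • y) := lintegral_sub_right_eq_self (fun y => P (t • y)) x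
    _ = ∫⁻ y, P y ∂(Measure.map (t • ·) volume) := by
        rw [lintegral_map hP (measurable_const_smul t)]
    _ = ENNReal.ofReal (t ^ n)⁻¹ * ∫⁻ y, P y := by
        rw [Measure.map_addHaar_smul _ ht.ne', lintegral_smul_measure, finrank_euclideanSpace_fin,
          abs_of_pos (by positivity), smul_eq_mul]
    _ = _ := by
        rw [lintegral_add_left_eq_self ((closedBall x (t * r)).indicator G) x,
          lintegral_indicator measurableSet_closedBall]

/-- Poincaré inequality relative to the centre of a ball. -/
lemma setLIntegral_enorm_le_of_fderiv {H : En n → En n} (hH : ContDiff ℝ 1 H) {x : En n} {r : ℝ}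
    {M : ℝ≥0∞} (hr : 0 < r) (h0 : H x = 0)
    (hM : ∀ s, 0 < s → s ≤ r →
      ∫⁻ y in closedBall x s, ‖fderiv ℝ H y‖ₑ ≤ M * volume (closedBall x s)) :
    ∫⁻ y in closedBall x r, ‖H y‖ₑ ≤ ENNReal.ofReal r * (M * volume (closedBall x r)) := by
  have hDc : Continuous (fderiv ℝ H) := hH.continuous_fderiv one_ne_zero
  have hDm : Measurable fun y => ‖fderiv ℝ H y‖ₑ := hDc.enorm.measurable
  have hpt : ∀ y ∈ closedBall x r, ‖H y‖ₑ ≤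
      ENNReal.ofReal r * ∫⁻ t in Ioc (0 : ℝ) 1, ‖fderiv ℝ H (x + t • (y - x))‖ₑ := by
    intro y hy
    have hd : ∀ t ∈ uIcc (0 : ℝ) 1, HasDerivAt (fun t : ℝ => H (x + t • (y - x)))
        (fderiv ℝ H (x + t • (y - x)) (y - x)) t := fun t _ => by
      have h1 : HasDerivAt (fun t : ℝ => x + t • (y - x)) (y - x) t := by
        simpa using ((hasDerivAt_id t).smul_const (y - x)).const_add x
      exact (hH.differentiable one_ne_zero _).hasFDerivAt.comp_hasDerivAt t h1
    have hc : Continuous fun t : ℝ => fderiv ℝ H (x + t • (y - x)) (y - x) :=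
      (hDc.comp (by fun_prop)).clm_apply continuous_const
    have h := intervalIntegral.integral_eq_sub_of_hasDerivAt hd (hc.intervalIntegrable 0 1)
    simp only [one_smul, add_sub_cancel, zero_smul, add_zero, h0, sub_zero] at h
    rw [← h, intervalIntegral.integral_of_le zero_le_one]
    refine (enorm_integral_le_lintegral_enorm _).trans ?_
    have hDt : Measurable fun t : ℝ => ‖fderiv ℝ H (x + t • (y - x))‖ₑ :=
      hDm.comp (by fun_prop : Continuous fun t : ℝ => x + t • (y - x)).measurable
    rw [← lintegral_const_mul _ hDt]
    refine lintegral_mono fun t => ?_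
    refine (ContinuousLinearMap.le_opENorm _ _).trans ?_
    rw [mul_comm]
    gcongr
    rw [← ofReal_norm]
    exact ENNReal.ofReal_le_ofReal (by rwa [mem_closedBall, dist_eq_norm] at hy)
  have hjm : Measurable fun q : En n × ℝ => ‖fderiv ℝ H (x + q.2 • (q.1 - x))‖ₑ :=
    (hDc.comp (by fun_prop)).enorm.measurable
  calc ∫⁻ y in closedBall x r, ‖H y‖ₑ
      ≤ ∫⁻ y in closedBall x r,
          ENNReal.ofReal r * ∫⁻ t in Ioc (0 : ℝ) 1, ‖fderiv ℝ H (x + t • (y - x))‖ₑ :=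
        setLIntegral_mono (hjm.lintegral_prod_right.const_mul _) hpt
    _ = ENNReal.ofReal r * ∫⁻ t in Ioc (0 : ℝ) 1,
          ∫⁻ y in closedBall x r, ‖fderiv ℝ H (x + t • (y - x))‖ₑ := by
        rw [lintegral_const_mul _ hjm.lintegral_prod_right,
          lintegral_lintegral_swap hjm.aemeasurable]
    _ ≤ ENNReal.ofReal r * ∫⁻ t in Ioc (0 : ℝ) 1, M * volume (closedBall x r) := by
        gcongr ENNReal.ofReal r * ?_
        refine setLIntegral_mono measurable_const fun t ht => ?_
        rw [setLIntegral_comp_homothety hDm x ht.1]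
        have htr : t * r ≤ r := mul_le_of_le_one_left hr.le ht.2
        calc _ ≤ ENNReal.ofReal (t ^ n)⁻¹ * (M * volume (closedBall x (t * r))) := by
              gcongr
              exact hM _ (mul_pos ht.1 hr) htr
          _ = (ENNReal.ofReal (t ^ n)⁻¹ * ENNReal.ofReal (t ^ n)) *
                (M * volume (closedBall x r)) := by
              rw [Measure.addHaar_closedBall_mul _ _ ht.1.le hr.le, finrank_euclideanSpace_fin,
                Measure.addHaar_closedBall_center _ x]
              ring
          _ = _ := by
              rw [← ENNReal.ofReal_mul (by have := ht.1; positivity),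
                inv_mul_cancel₀ (pow_pos ht.1 n).ne', ENNReal.ofReal_one, one_mul]
    _ = _ := by simp

lemma exists_forall_bump_convolution_close {f : En n → En n} {x : En n} {R ρ τ : ℝ}
    (hf : ContinuousOn f (closedBall x R)) (hρR : ρ < R) (hτ : 0 < τ) :
    ∃ δ, 0 < δ ∧ ρ + δ ≤ R ∧ ∀ φ : ContDiffBump (0 : En n), φ.rOut ≤ δ → ∀ y ∈ closedBall x ρ,
      ‖convolution (φ.normed volume) ((closedBall x R).indicator f)
        (ContinuousLinearMap.lsmul ℝ ℝ) volume y - f y‖ ≤ τ := by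
  have hSc : IsCompact (closedBall x R) := isCompact_closedBall x R
  obtain ⟨δ₁, hδ₁, hunif⟩ := Metric.uniformContinuousOn_iff.1
    (hSc.uniformContinuousOn_of_continuous hf) τ hτ
  have hδR := min_le_right δ₁ (R - ρ)
  refine ⟨min δ₁ (R - ρ), lt_min hδ₁ (by linarith), by linarith, fun φ hφ y hy => ?_⟩
  have hyS : y ∈ closedBall x R := closedBall_subset_closedBall hρR.le hy
  have hFi : Integrable ((closedBall x R).indicator f) :=
    (integrable_indicator_iff measurableSet_closedBall).2 (hf.integrableOn_compact hSc)
  have h := φ.dist_normed_convolution_le (μ := volume) (g := (closedBall x R).indicator f)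
    (x₀ := y) (ε := τ) hFi.aestronglyMeasurable (fun u hu => by
      have huy := (mem_ball.1 hu).trans_le hφ
      have huS : u ∈ closedBall x R := by
        have := dist_triangle u y x
        rw [mem_closedBall] at *
        linarith
      rw [indicator_of_mem huS, indicator_of_mem hyS]
      exact (hunif u huS y hyS (huy.trans_le (min_le_left _ _))).le)
  rwa [indicator_of_mem hyS, dist_eq_norm] at h

/-- Smooth approximation of the first-order remainder of `f` at a Lebesgue point of its weak
gradient. -/
lemma exists_smooth_approx {Ω : Set (En n)} {f : En n → En n} {g : En n → (En n →L[ℝ] En n)}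
    (hΩ : MeasurableSet Ω) (hcont : ContinuousOn f Ω) (hweak : HasWeakGradOn f g Ω) {x : En n}
    {R : ℝ} (hR : closedBall x R ⊆ Ω) (hg : IntegrableOn g (closedBall x R))
    (A : En n →L[ℝ] En n) {η : ℝ≥0∞}
    (hN : ∀ ρ, 0 < ρ → ρ ≤ R →
      ∫⁻ y in closedBall x ρ, ‖g y - A‖ₑ ≤ η * volume (closedBall x ρ))
    {ρ τ : ℝ} (hρ : 0 < ρ) (hρR : 2 * ρ < R) (hτ : 0 < τ) :
    ∃ H : En n → En n, ContDiff ℝ 1 H ∧ H x = 0 ∧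
      (∀ y ∈ closedBall x ρ, ‖H y - (f y - f x - A (y - x))‖ ≤ τ) ∧
      ∀ s, 0 < s → s ≤ 2 * ρ →
        ∫⁻ y in closedBall x s, ‖fderiv ℝ H y‖ₑ ≤ 4 ^ n * η * volume (closedBall x s) := by
  set S := closedBall x R with hSdef
  have hS : MeasurableSet S := measurableSet_closedBall
  have hSc : IsCompact S := isCompact_closedBall x R
  have hfS : IntegrableOn f S := (hcont.mono hR).integrableOn_compact hSc
  obtain ⟨δ₁, hδ₁, hδ₁R, hclose₁⟩ := exists_forall_bump_convolution_close (hcont.mono hR)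
    (show ρ < R by linarith) (half_pos hτ)
  obtain ⟨δ, hδ, hδδ₁, hδR, hδR'⟩ : ∃ δ, 0 < δ ∧ δ ≤ δ₁ ∧ 2 * ρ + δ ≤ R ∧ 2 * δ ≤ R := by
    refine ⟨min δ₁ (min (R - 2 * ρ) (R / 2)), by
      refine lt_min hδ₁ (lt_min ?_ ?_) <;> linarith, min_le_left _ _, ?_, ?_⟩
    · have := (min_le_right δ₁ (min (R - 2 * ρ) (R / 2))).trans (min_le_left _ _)
      linarith
    · have := (min_le_right δ₁ (min (R - 2 * ρ) (R / 2))).trans (min_le_right _ _)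
      linarith
  let φ : ContDiffBump (0 : En n) := ⟨δ / 2, δ, by positivity, by linarith⟩
  set k : En n → ℝ := φ.normed volume with hkdef
  have hk : ContDiff ℝ 1 k := φ.contDiff_normed
  have hks : HasCompactSupport k := φ.hasCompactSupport_normed
  have hk1 : ∫ y, k y = 1 := φ.integral_normed
  have hk0 : ∀ y, 0 ≤ k y := φ.nonneg_normed
  have hkz : ∀ y, y ∉ closedBall (0 : En n) δ → k y = 0 := fun y hy => by
    by_contra h
    have : y ∈ Function.support (φ.normed volume) := h
    rw [φ.support_normed_eq] at this
    exact hy (ball_subset_closedBall this)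
  set F := S.indicator f with hF
  have hFi : Integrable F := (integrable_indicator_iff hS).2 hfS
  set fδ := convolution k F (ContinuousLinearMap.lsmul ℝ ℝ) volume with hfδ
  have hfδC : ContDiff ℝ 1 fδ := hks.contDiff_convolution_left _ hk hFi.locallyIntegrable
  have hclose : ∀ y ∈ closedBall x ρ, ‖fδ y - f y‖ ≤ τ / 2 := hclose₁ φ hδδ₁
  set H : En n → En n := fun y => fδ y - fδ x - A (y - x) with hHdef
  have hHC : ContDiff ℝ 1 H :=
    (hfδC.sub contDiff_const).sub (A.contDiff.comp (contDiff_id.sub contDiff_const))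
  set K : En n → ℝ≥0∞ := fun y => ‖k y‖ₑ with hK
  have hKm : Measurable K := hk.continuous.enorm.measurable
  have hK1 : ∫⁻ y, K y = 1 := by
    have : ENNReal.ofReal (∫ y, k y) = ∫⁻ y, ENNReal.ofReal (k y) :=
      ofReal_integral_eq_lintegral_ofReal (hk.continuous.integrable_of_hasCompactSupport hks)
        (ae_of_all _ hk0)
    rw [hk1, ENNReal.ofReal_one] at this
    rw [this]
    refine lintegral_congr fun y => ?_
    rw [hK]
    exact Real.enorm_of_nonneg (hk0 y)
  have hKb : ∀ y, K y ≤ (volume (closedBall (0 : En n) (δ / 2)))⁻¹ := fun y => by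
    have h := φ.normed_le_div_measure_closedBall_rIn volume y
    rw [hK]
    simp only
    rw [Real.enorm_of_nonneg (hk0 y)]
    refine (ENNReal.ofReal_le_ofReal h).trans ?_
    rw [one_div, ENNReal.ofReal_inv_of_pos, measureReal_def,
      ENNReal.ofReal_toReal measure_closedBall_lt_top.ne]
    exact ENNReal.toReal_pos (measure_closedBall_pos volume _ φ.rIn_pos).ne'
      measure_closedBall_lt_top.ne
  set N : En n → ℝ≥0∞ := S.indicator fun y => ‖g y - A‖ₑ with hNdef
  have hgA : AEMeasurable (fun y => ‖g y - A‖ₑ) (volume.restrict S) :=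
    (hg.aestronglyMeasurable.sub aestronglyMeasurable_const).enorm
  have hNm : AEMeasurable N := (aemeasurable_indicator_iff hS).2 hgA
  have hNρ : ∀ r, 0 < r → r ≤ R →
      ∫⁻ y in closedBall x r, N y ≤ η * volume (closedBall x r) := fun r hr hrR => by
    refine le_trans (lintegral_mono fun y => ?_) (hN r hr hrR)
    exact indicator_le_self _ _ _
  have hbound : ∀ z ∈ closedBall x (2 * ρ), ‖fderiv ℝ H z‖ₑ ≤ ∫⁻ y, K (z - y) * N y := by
    intro z hz
    have hzS : closedBall z δ ⊆ S := closedBall_subset_closedBall' (by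
      rw [mem_closedBall] at hz
      linarith)
    have hkz' : ∀ y, y ∉ S → k (z - y) = 0 := fun y hy => hkz _ fun h => hy (hzS (by
      rwa [mem_closedBall, dist_comm, dist_eq_norm, ← sub_zero (z - y), ← dist_eq_norm]))
    have hts : tsupport (fun y => k (z - y)) ⊆ S :=
      closure_minimal (fun y hy => by_contra fun h => hy (hkz' y h)) isClosed_closedBall
    have hkc : Continuous fun y => k (z - y) := hk.continuous.comp (by fun_prop)
    have hki : ∫ y in S, k (z - y) = 1 := by
      rw [setIntegral_eq_integral_of_forall_compl_eq_zero hkz', integral_sub_left_eq_self k, hk1]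
    have hkiS : IntegrableOn (fun y => k (z - y)) S := hkc.continuousOn.integrableOn_compact hSc
    have hfd : ∀ v, fderiv ℝ H z v = ∫ y in S, k (z - y) • (g y - A) v := by
      intro v
      have h1 := fderiv_convolution_of_weak hΩ hS hR hfS
        (fun φ h1 h2 h3 => hweak φ h1 h2 h3 v) hk hks hts
      have h2 : HasFDerivAt H (fderiv ℝ fδ z - A) z := by
        have h3 := (hfδC.differentiable one_ne_zero z).hasFDerivAt.sub_const (fδ x)
        have h4 : HasFDerivAt (fun y => A (y - x)) A z := by
          have h5 := (A.hasFDerivAt (x := z - x)).comp z ((hasFDerivAt_id z).sub_const x)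
          rwa [ContinuousLinearMap.comp_id] at h5
        exact h3.sub h4
      have hgv₀ : IntegrableOn (fun y => g y v) S :=
        (ContinuousLinearMap.apply ℝ (En n) v).integrable_comp hg
      have hgv : IntegrableOn (fun y => k (z - y) • g y v) S :=
        hgv₀.continuousOn_smul hkc.continuousOn hSc
      rw [h2.fderiv, sub_apply, h1,
        setIntegral_eq_of_subset_of_forall_sdiff_eq_zero hΩ hR
          (fun y hy => by rw [hkz' y hy.2, zero_smul])]
      simp only [sub_apply, smul_sub]
      rw [integral_sub hgv (hkiS.smul_const _), integral_smul_const, hki, one_smul]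
    refine ContinuousLinearMap.opENorm_le_bound _ fun v => ?_
    rw [hfd, ← lintegral_mul_const' _ _ enorm_ne_top]
    refine (enorm_integral_le_lintegral_enorm _).trans ?_
    rw [← lintegral_indicator hS]
    refine lintegral_mono fun y => ?_
    by_cases hy : y ∈ S
    · rw [indicator_of_mem hy, hNdef, indicator_of_mem hy, enorm_smul, mul_assoc]
      gcongr
      exact ContinuousLinearMap.le_opENorm _ _
    · rw [indicator_of_notMem hy]
      exact zero_le
  refine ⟨H, hHC, by simp [hHdef], fun y hy => ?_, fun s hs hsρ => ?_⟩
  · have h1 := hclose y hy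
    have h2 := hclose x (mem_closedBall_self hρ.le)
    have h3 := norm_sub_le (fδ y - f y) (fδ x - f x)
    have h4 : H y - (f y - f x - A (y - x)) = (fδ y - f y) - (fδ x - f x) := by
      simp only [hHdef]
      abel
    rw [h4]
    linarith
  · refine (setLIntegral_mono' measurableSet_closedBall fun z hz =>
      hbound z (closedBall_subset_closedBall hsρ hz)).trans ?_
    exact lintegral_conv_le hδ hs hNm hKm hK1 (fun y hy => by rw [hK]; simp [hkz y hy]) hKb hNρ
      (by linarith) hδR'

lemma cap1_mono {A B : Set (En n)} (h : A ⊆ B) : cap1 A ≤ cap1 B := by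
  refine sInf_le_sInf ?_
  rintro c ⟨u, g, hu, hg, hw, ⟨V, hV, hBV, hV1⟩, rfl⟩
  exact ⟨u, g, hu, hg, hw, ⟨V, hV, h.trans hBV, hV1⟩, rfl⟩

lemma cap1_empty : cap1 (∅ : Set (En n)) = 0 := by
  have h := cap1_le_tsum (A := (∅ : Set (En n))) (u := fun _ _ => 0) (c := fun _ => 0)
    (fun _ => contDiff_const) (fun _ => HasCompactSupport.zero) (fun _ _ => le_rfl)
    (fun y hy => hy.elim) (fun k => by
      have h0 : ‖(0 : En n →L[ℝ] ℝ)‖ₑ = 0 := by rw [← ofReal_norm, norm_zero, ENNReal.ofReal_zero]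
      simp [h0])
  simpa using h

/-- At a Lebesgue point of the weak gradient the set where the first-order remainder is large is
thin in the sense of the 1-capacity. -/
lemma tendsto_cap1_remainder (hn : 2 ≤ n) {Ω : Set (En n)} {f : En n → En n}
    {g : En n → (En n →L[ℝ] En n)} (hΩ : MeasurableSet Ω) (hcont : ContinuousOn f Ω)
    (hweak : HasWeakGradOn f g Ω) {x : En n} {R : ℝ} (hR0 : 0 < R) (hR : closedBall x R ⊆ Ω)
    (hg : IntegrableOn g (closedBall x R))
    (hL : Tendsto (fun ρ => (∫⁻ y in closedBall x ρ, ‖g y - g x‖ₑ) / volume (closedBall x ρ))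
      (𝓝[>] 0) (𝓝 0)) {ε : ℝ} (hε : 0 < ε) :
    Tendsto (fun r : ℝ => cap1 ({y | y ≠ x ∧ ε * ‖y - x‖ ≤ ‖f y - f x - g x (y - x)‖} ∩ ball x r) /
      ENNReal.ofReal (r ^ (n - 1))) (𝓝[>] 0) (𝓝 0) := by
  obtain ⟨C, hC, hcap⟩ := exists_cap1_superlevel_le hn
  rw [ENNReal.tendsto_nhds_zero]
  intro e he
  obtain ⟨q, hq0, hqe⟩ := ENNReal.lt_iff_exists_nnreal_btwn.1 he
  have hq : 0 < (q : ℝ) := by exact_mod_cast hq0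
  set η : ℝ := q * ε / (C + 1) with hη
  have hηpos : 0 < η := by positivity
  set ω : ℝ := (volume (closedBall (0 : En n) 1)).toReal with hω
  have hωpos : 0 < ω := ENNReal.toReal_pos (measure_closedBall_pos volume _ one_pos).ne'
    measure_closedBall_lt_top.ne
  set θ : ℝ := η / (2 * 8 ^ n * ω) with hθ
  have hθpos : 0 < θ := by positivity
  have hvol : ∀ c : ℝ, 0 < c → volume (closedBall x c) = ENNReal.ofReal (c ^ n * ω) :=
    fun c hc => by
      rw [Measure.addHaar_closedBall' _ _ hc.le, finrank_euclideanSpace_fin,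
        ENNReal.ofReal_mul (by positivity), hω, ENNReal.ofReal_toReal measure_closedBall_lt_top.ne]
  have hev := (ENNReal.tendsto_nhds_zero.1 hL) (ENNReal.ofReal θ) (by simpa using hθpos)
  obtain ⟨R₁, hR₁, hR₁'⟩ := mem_nhdsGT_iff_exists_Ioo_subset.1 hev
  rw [mem_Ioi] at hR₁
  set R₀ := min R (R₁ / 2) with hR₀
  have hR₀pos : 0 < R₀ := lt_min hR0 (by positivity)
  have hN : ∀ ρ, 0 < ρ → ρ ≤ R₀ →
      ∫⁻ y in closedBall x ρ, ‖g y - g x‖ₑ ≤ ENNReal.ofReal θ * volume (closedBall x ρ) :=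
    fun ρ hρ hρR => by
      have hρ₁ : ρ ∈ Ioo 0 R₁ := ⟨hρ, by have := hρR.trans (min_le_right _ _); linarith⟩
      have h := hR₁' hρ₁
      rw [mem_ofPred_eq] at h
      rwa [ENNReal.div_le_iff (measure_closedBall_pos volume _ hρ).ne'
        measure_closedBall_lt_top.ne] at h
  have hRR : closedBall x R₀ ⊆ closedBall x R := closedBall_subset_closedBall (min_le_left _ _)
  have hsmall : Ioo (0 : ℝ) (min 1 (R₀ / 2)) ∈ 𝓝[>] (0 : ℝ) :=
    Ioo_mem_nhdsGT (lt_min one_pos (by positivity))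
  filter_upwards [hsmall] with r hr
  have hr1 : r ≤ 1 := hr.2.le.trans (min_le_left _ _)
  have hrR : 2 * r < R₀ := by
    have := hr.2.trans_le (min_le_right _ _)
    linarith
  have hmain := hcap (fun y => f y - f x - g x (y - x)) x r η ε hr.1 hr1 hηpos.le hε (by
    intro ρ τ hρ hρr hτ
    obtain ⟨H, hHC, hH0, hHc, hHd⟩ := exists_smooth_approx hΩ hcont hweak (hRR.trans hR)
      (hg.mono_set hRR) (g x) hN hρ (by linarith) hτ
    have hρ2 : 0 < 2 * ρ := by positivity
    have hkey : (4 : ℝ≥0∞) ^ n * ENNReal.ofReal θ * volume (closedBall x (2 * ρ)) =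
        ENNReal.ofReal (η / 2 * ρ ^ n) := by
      rw [hvol _ hρ2, ← ENNReal.ofReal_ofNat 4, ← ENNReal.ofReal_pow (by norm_num),
        ← ENNReal.ofReal_mul (by positivity), ← ENNReal.ofReal_mul (by positivity), hθ]
      congr 1
      rw [mul_pow, show (8 : ℝ) ^ n = 4 ^ n * 2 ^ n by rw [← mul_pow]; norm_num]
      field_simp
    refine ⟨H, hHC, hHc, ?_, ?_⟩
    · refine (hHd _ hρ2 le_rfl).trans (hkey.trans_le (ENNReal.ofReal_le_ofReal ?_))
      have : 0 < η * ρ ^ n := by positivity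
      linarith
    · refine (setLIntegral_enorm_le_of_fderiv hHC hρ2 hH0 hHd).trans ?_
      rw [hkey, ← ENNReal.ofReal_mul (by positivity)]
      exact ENNReal.ofReal_le_ofReal (by ring_nf; rfl))
  refine ENNReal.div_le_of_le_mul (hmain.trans ?_)
  rw [ENNReal.ofReal_mul (by positivity)]
  gcongr
  refine le_trans ?_ hqe.le
  rw [← ENNReal.ofReal_coe_nnreal]
  refine ENNReal.ofReal_le_ofReal ?_
  rw [hη, show C * (q * ε / (C + 1) / ε) = q * (C / (C + 1)) by field_simp]
  exact mul_le_of_le_one_right hq.le ((div_le_one (by positivity)).2 (by linarith))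

/-- Fine differentiability at a Lebesgue point of the weak gradient. -/
lemma exists_finelyOpen1_remainder_le (hn : 2 ≤ n) {Ω : Set (En n)} {f : En n → En n}
    {g : En n → (En n →L[ℝ] En n)} (hΩ : IsOpen Ω) (hcont : ContinuousOn f Ω)
    (hweak : HasWeakGradOn f g Ω) {x : En n} {R : ℝ} (hR0 : 0 < R) (hR : closedBall x R ⊆ Ω)
    (hg : IntegrableOn g (closedBall x R))
    (hL : Tendsto (fun ρ => (∫⁻ y in closedBall x ρ, ‖g y - g x‖ₑ) / volume (closedBall x ρ))
      (𝓝[>] 0) (𝓝 0)) {ε : ℝ} (hε : 0 < ε) :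
    ∃ U, FinelyOpen1 U ∧ x ∈ U ∧ ∀ y ∈ U, ‖f y - f x - g x (y - x)‖ ≤ ε * ‖y - x‖ := by
  set W : Set (En n) := {y ∈ Ω | ‖f y - f x - g x (y - x)‖ < ε * ‖y - x‖} with hW
  have hWo : IsOpen W := by
    have h1 : ContinuousOn (fun y => ε * ‖y - x‖ - ‖f y - f x - g x (y - x)‖) Ω := by
      have h2 : ContinuousOn (fun y => g x (y - x)) Ω := by fun_prop
      exact (ContinuousOn.sub (by fun_prop) ((hcont.sub continuousOn_const).sub h2).norm)
    have h2 := h1.isOpen_inter_preimage hΩ isOpen_Ioi (t := Ioi 0)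
    convert h2 using 1
    ext y
    simp [hW]
  refine ⟨insert x W, fun z hz => ?_, mem_insert _ _, ?_⟩
  · rcases eq_or_ne z x with rfl | hzx
    · refine tendsto_of_tendsto_of_tendsto_of_le_of_le' tendsto_const_nhds
        (tendsto_cap1_remainder hn hΩ.measurableSet hcont hweak hR0 hR hg hL hε)
        (Eventually.of_forall fun _ => zero_le) ?_
      filter_upwards [Ioo_mem_nhdsGT hR0] with r hr
      refine ENNReal.div_le_div_right (cap1_mono ?_) _
      rintro y ⟨hy, hyr⟩
      rw [mem_compl_iff, mem_insert_iff, not_or] at hy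
      refine ⟨⟨hy.1, not_lt.1 fun h => hy.2 ⟨hR ?_, h⟩⟩, hyr⟩
      exact ball_subset_closedBall (ball_subset_ball hr.2.le hyr)
    · have hzW : z ∈ W := hz.resolve_left hzx
      obtain ⟨d, hd, hdW⟩ := Metric.isOpen_iff.1 hWo z hzW
      refine tendsto_const_nhds.congr' ?_
      filter_upwards [Ioo_mem_nhdsGT hd] with r hr
      have : (insert x W)ᶜ ∩ ball z r = ∅ := by
        rw [eq_empty_iff_forall_notMem]
        exact fun y hy => hy.1 (mem_insert_of_mem _ (hdW (ball_subset_ball hr.2.le hy.2)))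
      rw [this, cap1_empty, ENNReal.zero_div]
  · rintro y (rfl | hy)
    · simp
    · exact hy.2.le

lemma eq_zero_of_weak_deriv_eq_zero {Ω : Set (En n)} {f : En n → En n} {v : En n} (hΩ : IsOpen Ω)
    (hne : Ω.Nonempty) (hcont : ContinuousOn f Ω) (hinj : InjOn f Ω)
    (hw : ∀ φ : En n → ℝ, ContDiff ℝ 1 φ → HasCompactSupport φ → tsupport φ ⊆ Ω →
      ∫ y in Ω, (fderiv ℝ φ y v) • f y = 0) : v = 0 := by
  obtain ⟨x, hx⟩ := hne
  obtain ⟨R, hR0, hR⟩ := Metric.nhds_basis_closedBall.mem_iff.1 (hΩ.mem_nhds hx)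
  set t : ℝ := R / 2 / (‖v‖ + 1)
  have ht : 0 < t := by positivity
  have htv : ‖t • v‖ ≤ R / 2 := by
    rw [norm_smul, Real.norm_of_nonneg ht.le, div_mul_eq_mul_div, div_le_iff₀ (by positivity)]
    nlinarith [norm_nonneg v]
  have hseg : ∀ s ∈ Icc (0 : ℝ) 1, x + s • (t • v) ∈ closedBall x (R / 2) := fun s hs => by
    rw [mem_closedBall, dist_eq_norm, add_sub_cancel_left, norm_smul, Real.norm_of_nonneg hs.1]
    exact (mul_le_of_le_one_left (norm_nonneg _) hs.2).trans htv
  have hend : x + t • v ∈ closedBall x (R / 2) := by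
    simpa using hseg 1 (right_mem_Icc.2 zero_le_one)
  have hRR : closedBall x (R / 2) ⊆ Ω := (closedBall_subset_closedBall (by linarith)).trans hR
  suffices f (x + t • v) = f x by
    have h := hinj (hRR hend) hx this
    rw [add_eq_left, smul_eq_zero] at h
    exact h.resolve_left ht.ne'
  refine eq_of_forall_dist_le fun τ hτ => ?_
  obtain ⟨δ, hδ, hδR, hclose⟩ := exists_forall_bump_convolution_close (hcont.mono hR)
    (show R / 2 < R by linarith) (half_pos hτ)
  let φ : ContDiffBump (0 : En n) := ⟨δ / 2, δ, by positivity, by linarith⟩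
  have hk : ContDiff ℝ 1 (φ.normed volume) := φ.contDiff_normed
  have hks : HasCompactSupport (φ.normed volume) := φ.hasCompactSupport_normed
  have hfS : IntegrableOn f (closedBall x R) :=
    (hcont.mono hR).integrableOn_compact (isCompact_closedBall x R)
  set F := convolution (φ.normed volume) ((closedBall x R).indicator f)
    (ContinuousLinearMap.lsmul ℝ ℝ) volume with hF
  have hFC : ContDiff ℝ 1 F := hks.contDiff_convolution_left _ hk
    ((integrable_indicator_iff measurableSet_closedBall).2 hfS).locallyIntegrable
  have hd : ∀ z ∈ closedBall x (R / 2), fderiv ℝ F z v = 0 := by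
    intro z hz
    have h := fderiv_convolution_of_weak (w := fun _ => 0) hΩ.measurableSet
      measurableSet_closedBall hR hfS (fun φ h1 h2 h3 => by simpa using hw φ h1 h2 h3) hk hks
      (z := z) (closure_minimal (fun y hy => ?_) isClosed_closedBall)
    · simpa using h
    · rw [Function.mem_support] at hy
      have : z - y ∈ Function.support (φ.normed volume) := hy
      rw [φ.support_normed_eq, mem_ball_zero_iff] at this
      change _ < δ at this
      have h3 := dist_triangle y z x
      rw [mem_closedBall] at *
      rw [← dist_eq_norm, dist_comm] at this
      linarith
  have hconst : F (x + t • v) = F x := by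
    have h1 : ∀ s ∈ Ico (0 : ℝ) 1, HasDerivWithinAt (fun s : ℝ => F (x + s • (t • v))) 0
        (Ici s) s := fun s hs => by
      have h2 : HasDerivAt (fun s : ℝ => x + s • (t • v)) (t • v) s := by
        simpa using ((hasDerivAt_id s).smul_const (t • v)).const_add x
      have h3 := (hFC.differentiable one_ne_zero (x + s • (t • v))).hasFDerivAt.comp_hasDerivAt s h2
      rw [map_smul, hd _ (hseg s ⟨hs.1, hs.2.le⟩), smul_zero] at h3
      exact h3.hasDerivWithinAt
    have h4 := constant_of_has_deriv_right_zero (a := (0 : ℝ)) (b := 1)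
      (f := fun s : ℝ => F (x + s • (t • v)))
      (hFC.continuous.comp (by fun_prop)).continuousOn h1 1 (right_mem_Icc.2 zero_le_one)
    simpa using h4
  have h1 := hclose φ le_rfl _ hend
  have h2 := hclose φ le_rfl x (mem_closedBall_self (by linarith))
  rw [← hF] at h1 h2
  rw [← dist_eq_norm] at h1 h2
  rw [hconst] at h1
  have := dist_triangle_left (f (x + t • v)) (f x) (F x)
  linarith

/-- All integrals in the definition of the weak gradient of an injective continuous map converge:
otherwise they would be junk values and the map would be constant along a direction. -/
lemma integrableOn_smul_weakGrad {Ω : Set (En n)} {f : En n → En n}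
    {g : En n → (En n →L[ℝ] En n)} (hΩ : IsOpen Ω) (hcont : ContinuousOn f Ω) (hinj : InjOn f Ω)
    (hweak : HasWeakGradOn f g Ω) {φ₀ : En n → ℝ} (h1 : ContDiff ℝ 1 φ₀)
    (h2 : HasCompactSupport φ₀) (h3 : tsupport φ₀ ⊆ Ω) (v : En n) :
    IntegrableOn (fun y => φ₀ y • g y v) Ω := by
  by_contra hni
  have hfi : ∀ φ : En n → ℝ, ContDiff ℝ 1 φ → HasCompactSupport φ → tsupport φ ⊆ Ω →
      IntegrableOn (fun y => fderiv ℝ φ y v • f y) Ω := by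
    intro φ h1 h2 h3
    have hc : Continuous fun y => fderiv ℝ φ y v :=
      (h1.continuous_fderiv one_ne_zero).clm_apply continuous_const
    have h4 : IntegrableOn (fun y => fderiv ℝ φ y v • f y) (tsupport φ) :=
      (hc.continuousOn.smul (hcont.mono h3)).integrableOn_compact h2
    refine h4.of_forall_sdiff_eq_zero hΩ.measurableSet fun y hy => ?_
    have : fderiv ℝ φ y = 0 := by
      by_contra h
      exact hy.2 (support_fderiv_subset ℝ h)
    rw [this, zero_apply, zero_smul]
  have hv : v = 0 := by
    refine eq_zero_of_weak_deriv_eq_zero hΩ ?_ hcont hinj fun φ k1 k2 k3 => ?_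
    · by_contra hne
      rw [not_nonempty_iff_eq_empty] at hne
      exact hni (by simp [hne])
    · have h0 : ∫ y in Ω, fderiv ℝ φ₀ y v • f y = 0 := by
        rw [hweak φ₀ h1 h2 h3 v, integral_undef hni, neg_zero]
      by_cases hφ : IntegrableOn (fun y => φ y • g y v) Ω
      · have hs : ¬ IntegrableOn (fun y => (φ + φ₀) y • g y v) Ω := fun h => hni (by
          have := h.sub hφ
          refine this.congr (ae_of_all _ fun y => ?_)
          simp [add_smul])
        have h5 := hweak (φ + φ₀) (k1.add h1) (k2.add h2)
          ((tsupport_add φ φ₀).trans (union_subset k3 h3)) v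
        rw [integral_undef hs, neg_zero] at h5
        have h6 : ∀ y, fderiv ℝ (φ + φ₀) y v • f y =
            fderiv ℝ φ y v • f y + fderiv ℝ φ₀ y v • f y := fun y => by
          rw [fderiv_add (k1.differentiable one_ne_zero y) (h1.differentiable one_ne_zero y),
            add_apply, add_smul]
        simp_rw [h6] at h5
        rwa [integral_add (hfi φ k1 k2 k3) (hfi φ₀ h1 h2 h3), h0, add_zero] at h5
      · rw [hweak φ k1 k2 k3 v, integral_undef hφ, neg_zero]
  exact hni (by simp [hv])

lemma integrable_sum_clm_apply {ι α E F : Type*} [Fintype ι] [MeasurableSpace α] {μ : Measure α}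
    [NormedAddCommGroup E] [NormedSpace ℝ E] [NormedAddCommGroup F] [NormedSpace ℝ F]
    (L : ι → E →L[ℝ] F) {w : ι → α → E} (hw : ∀ i, Integrable (w i) μ) :
    Integrable (fun y => ∑ i, L i (w i y)) μ :=
  integrable_finsetSum _ fun i _ => (L i).integrable_comp (hw i)

lemma integrable_clm_of_apply {μ : Measure (En n)} {g : En n → (En n →L[ℝ] En n)}
    (hg : ∀ v, Integrable (fun y => g y v) μ) : Integrable g μ := by
  obtain ⟨L, hL⟩ : ∃ L : Fin n → (En n →L[ℝ] (En n →L[ℝ] En n)), ∀ i w u, L i w u = u i • w :=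
    ⟨fun i => ContinuousLinearMap.smulRightL ℝ (En n) (En n) (EuclideanSpace.proj i),
      fun i w u => rfl⟩
  have hsum : ∀ y, ∑ i : Fin n, L i (g y (EuclideanSpace.basisFun (Fin n) ℝ i)) = g y := by
    intro y
    ext1 u
    conv_rhs => rw [← (EuclideanSpace.basisFun (Fin n) ℝ).sum_repr u]
    rw [map_sum, sum_apply]
    simp only [hL, map_smul, EuclideanSpace.basisFun_repr]
  have hg' : g = fun y => ∑ i : Fin n, L i (g y (EuclideanSpace.basisFun (Fin n) ℝ i)) :=
    funext fun y => (hsum y).symm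
  rw [hg']
  exact integrable_sum_clm_apply L fun i => hg _

lemma integrableOn_weakGrad {Ω : Set (En n)} {f : En n → En n} {g : En n → (En n →L[ℝ] En n)}
    (hΩ : IsOpen Ω) (hcont : ContinuousOn f Ω) (hinj : InjOn f Ω) (hweak : HasWeakGradOn f g Ω)
    {p : En n} {R : ℝ} (hR0 : 0 < R) (hR : closedBall p (2 * R) ⊆ Ω) :
    IntegrableOn g (closedBall p R) := by
  let ψ : ContDiffBump p := ⟨R, 2 * R, hR0, by linarith⟩
  have hgv : ∀ v, IntegrableOn (fun y => g y v) (closedBall p R) := by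
    intro v
    have h := (integrableOn_smul_weakGrad hΩ hcont hinj hweak ψ.contDiff ψ.hasCompactSupport
      (by rw [ψ.tsupport_eq]; exact hR) v).mono_set
      ((closedBall_subset_closedBall (by linarith)).trans hR : closedBall p R ⊆ Ω)
    refine h.congr_fun (fun y hy => ?_) measurableSet_closedBall
    simp only
    rw [ψ.one_of_mem_closedBall hy, one_smul]
  exact integrable_clm_of_apply hgv

lemma ae_tendsto_lintegral_sub_div {E : Type*} [NormedAddCommGroup E] {g : En n → E}
    {p : En n} {R : ℝ} (hg : IntegrableOn g (closedBall p R)) :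
    ∀ᵐ x, x ∈ ball p R →
      Tendsto (fun ρ => (∫⁻ y in closedBall x ρ, ‖g y - g x‖ₑ) / volume (closedBall x ρ))
        (𝓝[>] 0) (𝓝 0) := by
  have hG := (integrable_indicator_iff measurableSet_closedBall).2 hg
  filter_upwards [(Besicovitch.vitaliFamily
    (volume : Measure (En n))).ae_tendsto_lintegral_enorm_sub_div_of_integrable hG] with x hx hxp
  refine (hx.comp (Besicovitch.tendsto_filterAt volume x)).congr' ?_
  have hpos : 0 < R - dist x p := sub_pos.2 (mem_ball.1 hxp)
  filter_upwards [Ioo_mem_nhdsGT hpos] with ρ hρ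
  have hsub : closedBall x ρ ⊆ closedBall p R :=
    closedBall_subset_closedBall' (by linarith [hρ.2])
  simp only [Function.comp_apply]
  congr 1
  refine setLIntegral_congr_fun measurableSet_closedBall fun y hy => ?_
  simp only [indicator_of_mem (hsub hy), indicator_of_mem (ball_subset_closedBall hxp)]

lemma measure_image_ball_tendsto (hn : 0 < n) {f : En n → En n} {x : En n} {J : ℝ≥0∞} (hJ : J ≠ ∞)
    (h : Tendsto (fun r => volume (f '' closedBall x r) / volume (closedBall x r)) (𝓝[>] 0) (𝓝 J)) :
    Tendsto (fun r => volume (f '' ball x r) / volume (ball x r)) (𝓝[>] 0) (𝓝 J) := by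
  have : Nontrivial (En n) :=
    Module.nontrivial_of_finrank_pos (R := ℝ) (by rwa [finrank_euclideanSpace_fin])
  refine tendsto_order.2 ⟨fun l hl => ?_, fun u hu => ?_⟩
  · have hcont : Tendsto (fun t : ℝ => ENNReal.ofReal (t ^ n) * J) (𝓝[<] 1) (𝓝 J) := by
      have h1 : Continuous fun t : ℝ => ENNReal.ofReal (t ^ n) * J :=
        (ENNReal.continuous_mul_const hJ).comp
          (ENNReal.continuous_ofReal.comp (continuous_pow n))
      have h2 := (h1.tendsto 1).mono_left (nhdsWithin_le_nhds (s := Iio 1))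
      simpa using h2
    obtain ⟨t, htl, ht⟩ := ((hcont.eventually (lt_mem_nhds hl)).and
      (Ioo_mem_nhdsLT (zero_lt_one' ℝ))).exists
    have hscale : Tendsto (fun r : ℝ => t * r) (𝓝[>] 0) (𝓝[>] 0) := by
      refine tendsto_nhdsWithin_iff.2 ⟨?_, ?_⟩
      · have := ((continuous_const_mul t).tendsto 0).mono_left
          (nhdsWithin_le_nhds (s := Ioi (0 : ℝ)))
        simpa using this
      · filter_upwards [self_mem_nhdsWithin] with r hr
        exact mul_pos ht.1 hr
    have h2 := ENNReal.Tendsto.const_mul (a := ENNReal.ofReal (t ^ n)) (h.comp hscale)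
      (Or.inr ENNReal.ofReal_ne_top)
    filter_upwards [h2.eventually (lt_mem_nhds htl), self_mem_nhdsWithin] with r hr hr0
    refine hr.trans_le ?_
    have hr0' : (0 : ℝ) < r := hr0
    have hv : volume (closedBall x (t * r)) = ENNReal.ofReal (t ^ n) * volume (ball x r) := by
      rw [Measure.addHaar_closedBall volume x (mul_pos ht.1 hr0').le,
        Measure.addHaar_ball volume x hr0'.le, finrank_euclideanSpace_fin, mul_pow,
        ENNReal.ofReal_mul (pow_nonneg ht.1.le n), mul_assoc]
    have ht0 : ENNReal.ofReal (t ^ n) ≠ 0 := by simpa using pow_pos ht.1 n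
    simp only [Function.comp_apply]
    rw [hv, ← mul_div_assoc, ENNReal.mul_div_mul_left _ _ ht0 ENNReal.ofReal_ne_top]
    gcongr
    exact closedBall_subset_ball (by nlinarith [ht.2])
  · filter_upwards [h.eventually (gt_mem_nhds hu), self_mem_nhdsWithin] with r hr hr0
    refine lt_of_le_of_lt ?_ hr
    have hr0' : (0 : ℝ) < r := hr0
    rw [Measure.addHaar_closedBall_eq_addHaar_ball]
    gcongr
    exact ball_subset_closedBall

lemma ae_tendsto_measure_image_ball (hn : 0 < n) {f : En n → En n} {p : En n} {R : ℝ}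
    (hcont : ContinuousOn f (closedBall p R)) (hinj : InjOn f (closedBall p R)) :
    ∀ᵐ x, x ∈ ball p R → ∃ J : ℝ≥0∞, J ≠ ∞ ∧
      Tendsto (fun r => volume (f '' ball x r) / volume (ball x r)) (𝓝[>] 0) (𝓝 J) := by
  have hme := hcont.measurableEmbedding measurableSet_closedBall hinj
  set ν : Measure (En n) :=
    (volume.comap ((closedBall p R).domRestrict f)).map Subtype.val with hν
  have hνA : ∀ A, MeasurableSet A → ν A = volume (f '' (closedBall p R ∩ A)) := by
    intro A hA
    rw [hν, Measure.map_apply measurable_subtype_coe hA, hme.comap_apply]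
    congr 1
    rw [image_domRestrict, inter_comm]
  have : IsFiniteMeasure ν := by
    refine ⟨?_⟩
    rw [hνA _ MeasurableSet.univ, inter_univ]
    exact ((isCompact_closedBall p R).image_of_continuousOn hcont).measure_lt_top
  filter_upwards [Besicovitch.ae_tendsto_rnDeriv ν (volume : Measure (En n)),
    ν.rnDeriv_lt_top volume] with x hx hlt hxp
  refine ⟨_, hlt.ne, measure_image_ball_tendsto hn hlt.ne (hx.congr' ?_)⟩
  have hpos : 0 < R - dist x p := sub_pos.2 (mem_ball.1 hxp)
  filter_upwards [Ioo_mem_nhdsGT hpos] with r hr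
  have hsub : closedBall x r ⊆ closedBall p R :=
    closedBall_subset_closedBall' (by linarith [hr.2])
  rw [hνA _ measurableSet_closedBall, inter_eq_self_of_subset_right hsub]

lemma FinelyOpen1.eventually_volume_compl_le (hn : 0 < n) {U : Set (En n)} (hU : FinelyOpen1 U)
    {x : En n} (hx : x ∈ U) {η : ℝ} (hη : 0 < η) :
    ∀ᶠ r in 𝓝[>] 0, volume (Uᶜ ∩ ball x r) ≤ ENNReal.ofReal (η * r ^ n) := by
  have hη' : 0 < ENNReal.ofReal (η / 4) := by simpa using hη
  filter_upwards [(hU x hx).eventually (gt_mem_nhds hη'), self_mem_nhdsWithin] with r hr hr0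
  have hr0' : (0 : ℝ) < r := hr0
  have hc : cap1 (Uᶜ ∩ ball x r) ≤ ENNReal.ofReal (η / 4) * ENNReal.ofReal (r ^ (n - 1)) :=
    (ENNReal.div_le_iff (by simpa using pow_pos hr0' _) ENNReal.ofReal_ne_top).1 hr.le
  calc volume (Uᶜ ∩ ball x r)
      ≤ ENNReal.ofReal (4 * r) * cap1 (Uᶜ ∩ ball x r) :=
        volume_le_mul_cap1 hn hr0' inter_subset_right
    _ ≤ ENNReal.ofReal (4 * r) * (ENNReal.ofReal (η / 4) * ENNReal.ofReal (r ^ (n - 1))) := by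
        gcongr
    _ = ENNReal.ofReal (η * r ^ n) := by
        rw [← ENNReal.ofReal_mul (by positivity), ← ENNReal.ofReal_mul (by positivity)]
        congr 1
        obtain ⟨m, rfl⟩ := Nat.exists_eq_succ_of_ne_zero hn.ne'
        simp only [Nat.succ_eq_add_one, Nat.add_sub_cancel]
        ring

lemma FinelyOpen1.eventually_inter_ball_nonempty (hn : 0 < n) {U V : Set (En n)}
    (hU : FinelyOpen1 U) (hV : FinelyOpen1 V) {x : En n} (hxU : x ∈ U) (hxV : x ∈ V)
    {κ : ℝ} (hκ : 0 < κ) :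
    ∀ᶠ r in 𝓝[>] 0, ∀ z, ball z (κ * r) ⊆ ball x r → (ball z (κ * r) ∩ (U ∩ V)).Nonempty := by
  obtain ⟨w, hw0, hw⟩ : ∃ w : ℝ, 0 < w ∧ volume (ball (0 : En n) 1) = ENNReal.ofReal w :=
    ⟨(volume (ball (0 : En n) 1)).toReal,
      ENNReal.toReal_pos (measure_ball_pos volume 0 one_pos).ne' measure_ball_lt_top.ne,
      (ENNReal.ofReal_toReal measure_ball_lt_top.ne).symm⟩
  have hη : 0 < κ ^ n * w / 4 := by positivity
  filter_upwards [hU.eventually_volume_compl_le hn hxU hη,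
    hV.eventually_volume_compl_le hn hxV hη, self_mem_nhdsWithin] with r h1 h2 hr0 z hz
  have hr0' : (0 : ℝ) < r := hr0
  rw [nonempty_iff_ne_empty]
  intro hemp
  have hsub : ball z (κ * r) ⊆ (Uᶜ ∩ ball x r) ∪ (Vᶜ ∩ ball x r) := by
    intro y hy
    by_cases hyU : y ∈ U
    · by_cases hyV : y ∈ V
      · exact absurd (show y ∈ ball z (κ * r) ∩ (U ∩ V) from ⟨hy, hyU, hyV⟩)
          (by rw [hemp]; exact notMem_empty y)
      · exact Or.inr ⟨hyV, hz hy⟩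
    · exact Or.inl ⟨hyU, hz hy⟩
  have h3 := (measure_mono hsub).trans ((measure_union_le _ _).trans (add_le_add h1 h2))
  rw [Measure.addHaar_ball_of_pos volume z (mul_pos hκ hr0'), finrank_euclideanSpace_fin, hw,
    ← ENNReal.ofReal_mul (by positivity), ← ENNReal.ofReal_add (by positivity) (by positivity),
    ENNReal.ofReal_le_ofReal_iff (by positivity)] at h3
  have : 0 < κ ^ n * w * r ^ n := by positivity
  rw [mul_pow] at h3
  nlinarith

/-- At a point of fine differentiability, images of small balls intersected with any 1-finely open
set have diameter almost `2 ‖A‖ r`. -/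
lemma eventually_le_diam_image_inter (hn : 0 < n) {f : En n → En n} {A : En n →L[ℝ] En n}
    {x : En n} (hA : ∀ ε : ℝ, 0 < ε → ∃ U, FinelyOpen1 U ∧ x ∈ U ∧
      ∀ y ∈ U, ‖f y - f x - A (y - x)‖ ≤ ε * ‖y - x‖)
    {U : Set (En n)} (hU : FinelyOpen1 U) (hxU : x ∈ U) {c : ℝ} (hc : c < 2 * ‖A‖) :
    ∀ᶠ r in 𝓝[>] 0, ENNReal.ofReal (c * r) ≤ ediam (f '' (ball x r ∩ U)) := by
  rcases le_or_gt c 0 with hc0 | hc0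
  · filter_upwards [self_mem_nhdsWithin] with r hr
    rw [ENNReal.ofReal_of_nonpos (mul_nonpos_of_nonpos_of_nonneg hc0 (le_of_lt hr))]
    exact zero_le
  obtain ⟨e, he, hce⟩ := A.exists_lt_apply_of_lt_opNorm (show c / 2 < ‖A‖ by linarith)
  set δ := ‖A e‖ - c / 2 with hδ
  have hδ0 : 0 < δ := sub_pos.2 hce
  obtain ⟨V, hV, hxV, hVε⟩ := hA (δ / 2) (by positivity)
  set κ := min (1 - ‖e‖) (δ / (2 * (‖A‖ + 1))) with hκ
  have hA0 := norm_nonneg A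
  have hκ0 : 0 < κ := lt_min (sub_pos.2 he) (by positivity)
  have hκ1 : ‖e‖ + κ ≤ 1 := by linarith [min_le_left (1 - ‖e‖) (δ / (2 * (‖A‖ + 1)))]
  have hκ2 : ‖A‖ * κ ≤ δ / 2 := by
    have h1 : κ ≤ δ / (2 * (‖A‖ + 1)) := min_le_right _ _
    rw [le_div_iff₀ (by positivity)] at h1
    nlinarith
  filter_upwards [hU.eventually_inter_ball_nonempty hn hV hxU hxV hκ0, self_mem_nhdsWithin]
    with r hr hr0
  have hr0' : (0 : ℝ) < r := hr0
  have hsub : ∀ v : En n, ‖v‖ ≤ ‖e‖ → ball (x + r • v) (κ * r) ⊆ ball x r := by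
    intro v hv
    refine ball_subset_ball' ?_
    rw [dist_eq_norm, add_sub_cancel_left, norm_smul, Real.norm_of_nonneg hr0'.le]
    nlinarith
  have key : ∀ v : En n, ‖v‖ ≤ ‖e‖ → ∃ y ∈ ball x r ∩ U, ‖f y - f x - r • A v‖ ≤ δ * r := by
    intro v hv
    obtain ⟨y, hy, hyU, hyV⟩ := hr _ (hsub v hv)
    have hyr := hsub v hv hy
    refine ⟨y, ⟨hyr, hyU⟩, ?_⟩
    have e1 : f y - f x - r • A v = (f y - f x - A (y - x)) + A (y - (x + r • v)) := by
      simp only [map_sub, map_add, map_smul]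
      abel
    rw [mem_ball, dist_eq_norm] at hy hyr
    calc ‖f y - f x - r • A v‖ ≤ ‖f y - f x - A (y - x)‖ + ‖A (y - (x + r • v))‖ := by
          rw [e1]
          exact norm_add_le _ _
      _ ≤ δ / 2 * ‖y - x‖ + ‖A‖ * ‖y - (x + r • v)‖ := add_le_add (hVε y hyV) (A.le_opNorm _)
      _ ≤ δ / 2 * r + ‖A‖ * (κ * r) := by gcongr
      _ ≤ δ * r := by nlinarith
  obtain ⟨y, hy, hy'⟩ := key e le_rfl
  obtain ⟨z, hz, hz'⟩ := key (-e) (norm_neg e).le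
  refine le_trans ?_ (edist_le_ediam_of_mem (mem_image_of_mem f hy) (mem_image_of_mem f hz))
  rw [edist_dist, dist_eq_norm]
  refine ENNReal.ofReal_le_ofReal ?_
  have e2 : (2 * r) • A e = (f y - f z) - (f y - f x - r • A e) + (f z - f x - r • A (-e)) := by
    rw [map_neg, smul_neg, mul_smul, two_smul]
    abel
  have e3 : 2 * r * ‖A e‖ ≤ ‖f y - f z‖ + δ * r + δ * r := by
    calc 2 * r * ‖A e‖ = ‖(2 * r) • A e‖ := by
          rw [norm_smul, Real.norm_of_nonneg (by positivity)]
      _ ≤ ‖f y - f z‖ + ‖f y - f x - r • A e‖ + ‖f z - f x - r • A (-e)‖ := by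
          rw [e2]
          exact (norm_add_le _ _).trans (add_le_add_left (norm_sub_le _ _) _)
      _ ≤ _ := by gcongr
  have : δ * r = ‖A e‖ * r - c / 2 * r := by rw [hδ]; ring
  linarith

lemma diam_image_inter_le {f : En n → En n} {A : En n →L[ℝ] En n} {x : En n} {U : Set (En n)}
    {ε : ℝ} (hε : 0 ≤ ε) (hU : ∀ y ∈ U, ‖f y - f x - A (y - x)‖ ≤ ε * ‖y - x‖) (r : ℝ) :
    ediam (f '' (ball x r ∩ U)) ≤ ENNReal.ofReal (2 * (‖A‖ + ε) * r) := by
  refine ediam_le ?_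
  have key : ∀ y ∈ ball x r ∩ U, ‖f y - f x‖ ≤ (‖A‖ + ε) * r := by
    rintro y ⟨hy, hyU⟩
    rw [mem_ball, dist_eq_norm] at hy
    calc ‖f y - f x‖ ≤ ‖f y - f x - A (y - x)‖ + ‖A (y - x)‖ := by
          simpa using norm_add_le (f y - f x - A (y - x)) (A (y - x))
      _ ≤ ε * ‖y - x‖ + ‖A‖ * ‖y - x‖ := add_le_add (hU y hyU) (A.le_opNorm _)
      _ = (‖A‖ + ε) * ‖y - x‖ := by ring
      _ ≤ (‖A‖ + ε) * r := by gcongr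
  rintro _ ⟨y, hy, rfl⟩ _ ⟨z, hz, rfl⟩
  rw [edist_dist, dist_eq_norm]
  refine ENNReal.ofReal_le_ofReal ?_
  calc ‖f y - f z‖ ≤ ‖f y - f x‖ + ‖f z - f x‖ := by
        simpa using norm_sub_le (f y - f x) (f z - f x)
    _ ≤ 2 * (‖A‖ + ε) * r := by linarith [key y hy, key z hz]

lemma tendsto_dilatation_quotient {f : En n → En n} {x : En n} {J : ℝ≥0∞}
    (hJ : Tendsto (fun r => volume (f '' ball x r) / volume (ball x r)) (𝓝[>] 0) (𝓝 J)) (c : ℝ) :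
    Tendsto (fun r => (ENNReal.ofReal (c * r) ^ n / volume (f '' ball x r)) ^ (((n : ℝ) - 1)⁻¹))
      (𝓝[>] 0)
      (𝓝 ((ENNReal.ofReal c ^ n / (volume (ball (0 : En n) 1) * J)) ^ (((n : ℝ) - 1)⁻¹))) := by
  have hw0 : volume (ball (0 : En n) 1) ≠ 0 := (measure_ball_pos volume 0 one_pos).ne'
  have hw1 : volume (ball (0 : En n) 1) ≠ ∞ := measure_ball_lt_top.ne
  have h1 := ENNReal.Tendsto.const_mul (a := volume (ball (0 : En n) 1)) hJ (Or.inr hw1)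
  have h2 := ENNReal.Tendsto.const_div (a := ENNReal.ofReal c ^ n) h1
    (Or.inr (ENNReal.pow_ne_top ENNReal.ofReal_ne_top))
  refine ((ENNReal.continuous_rpow_const.tendsto _).comp h2).congr' ?_
  filter_upwards [self_mem_nhdsWithin] with r hr0
  have hr0' : (0 : ℝ) < r := hr0
  simp only [Function.comp_apply]
  congr 1
  have hr1 : ENNReal.ofReal r ^ n ≠ 0 := pow_ne_zero _ (by simpa using hr0')
  have hr2 : ENNReal.ofReal r ^ n ≠ ∞ := ENNReal.pow_ne_top ENNReal.ofReal_ne_top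
  rw [Measure.addHaar_ball_of_pos volume x hr0', finrank_euclideanSpace_fin,
    ENNReal.ofReal_pow hr0'.le, ENNReal.ofReal_mul' hr0'.le, mul_pow, ← mul_div_assoc,
    mul_comm (ENNReal.ofReal r ^ n), ENNReal.mul_div_mul_left _ _ hw0 hw1]
  rw [div_eq_mul_inv (ENNReal.ofReal c ^ n), ENNReal.inv_div (Or.inl hr2) (Or.inl hr1),
    ← mul_div_assoc]

/-- The pointwise identity at a point of fine differentiability where the volume derivative exists. -/
lemma Kfine_pow_mul_Jvol_eq_of_finely_differentiable (hn : 2 ≤ n) {f : En n → En n}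
    {A : En n →L[ℝ] En n} {x : En n} (hA : ∀ ε : ℝ, 0 < ε → ∃ U, FinelyOpen1 U ∧ x ∈ U ∧
      ∀ y ∈ U, ‖f y - f x - A (y - x)‖ ≤ ε * ‖y - x‖)
    {J : ℝ≥0∞} (hJ : J ≠ ∞)
    (hlim : Tendsto (fun r => volume (f '' ball x r) / volume (ball x r)) (𝓝[>] 0) (𝓝 J))
    (hpos : ∀ᶠ r in 𝓝[>] 0, volume (f '' ball x r) ≠ 0) (hK : Kfine f x < ∞) :
    Kfine f x ^ (n - 1) * Jvol f x
      = 2 ^ n * ENNReal.ofReal (‖A‖ ^ n) / volume (ball (0 : En n) 1) := by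
  have hn0 : n ≠ 0 := by omega
  have hw0 : volume (ball (0 : En n) 1) ≠ 0 := (measure_ball_pos volume 0 one_pos).ne'
  have hw1 : volume (ball (0 : En n) 1) ≠ ∞ := measure_ball_lt_top.ne
  have hJvol : Jvol f x = J := hlim.limsup_eq
  rw [hJvol]
  have hn1 : (0 : ℝ) < (n : ℝ) - 1 := by
    have : (2 : ℝ) ≤ n := by exact_mod_cast hn
    linarith
  set D : ℝ → ℝ≥0∞ := fun c =>
    (ENNReal.ofReal c ^ n / (volume (ball (0 : En n) 1) * J)) ^ (((n : ℝ) - 1)⁻¹) with hD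
  have lower : ∀ c < 2 * ‖A‖, D c ≤ Kfine f x := by
    intro c hc
    refine le_iInf₂ fun U hU => le_iInf fun hxU => ?_
    simp only [hD]
    rw [← (tendsto_dilatation_quotient hlim c).limsup_eq]
    refine limsup_le_limsup ?_
    filter_upwards [eventually_le_diam_image_inter (by omega) hA hU hxU hc] with r hr
    unfold KfU
    split_ifs
    · exact le_top
    · gcongr
      exact hr
  have upper : ∀ c > 2 * ‖A‖, Kfine f x ≤ D c := by
    intro c hc
    obtain ⟨U, hU, hxU, hUε⟩ := hA ((c - 2 * ‖A‖) / 2) (by linarith)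
    refine (iInf₂_le_of_le U hU (iInf_le _ hxU)).trans ?_
    simp only [hD]
    rw [← (tendsto_dilatation_quotient hlim c).limsup_eq]
    refine limsup_le_limsup ?_
    filter_upwards [hpos] with r hr
    unfold KfU
    rw [if_neg hr]
    gcongr
    refine (diam_image_inter_le (by linarith) hUε r).trans_eq ?_
    congr 1
    ring
  rcases eq_or_ne J 0 with hJ0 | hJ0
  · have hA0 : ‖A‖ = 0 := by
      by_contra h
      have hApos : 0 < ‖A‖ := lt_of_le_of_ne (norm_nonneg A) (Ne.symm h)
      have h1 := lower ‖A‖ (by linarith)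
      have h2 : D ‖A‖ = ∞ := by
        simp only [hD, hJ0, mul_zero]
        rw [ENNReal.div_zero (pow_ne_zero _ (ENNReal.ofReal_pos.2 hApos).ne'),
          ENNReal.top_rpow_of_pos (inv_pos.2 hn1)]
      rw [h2] at h1
      exact absurd hK (not_lt.2 h1)
    rw [hJ0, hA0, zero_pow hn0]
    simp
  · have hcont : Continuous D := by
      have h0 : volume (ball (0 : En n) 1) * J ≠ 0 := mul_ne_zero hw0 hJ0
      refine ENNReal.continuous_rpow_const.comp ((ENNReal.continuous_div_const _ h0).comp ?_)
      exact (ENNReal.continuous_pow n).comp ENNReal.continuous_ofReal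
    have hle : D (2 * ‖A‖) ≤ Kfine f x :=
      le_of_tendsto ((hcont.tendsto _).mono_left nhdsWithin_le_nhds)
        (eventually_nhdsWithin_of_forall (s := Iio (2 * ‖A‖)) lower)
    have hge : Kfine f x ≤ D (2 * ‖A‖) :=
      ge_of_tendsto ((hcont.tendsto _).mono_left nhdsWithin_le_nhds)
        (eventually_nhdsWithin_of_forall (s := Ioi (2 * ‖A‖)) upper)
    have hcast : (n : ℝ) - 1 = ((n - 1 : ℕ) : ℝ) := by
      rw [Nat.cast_sub (by omega), Nat.cast_one]
    rw [le_antisymm hge hle, hD]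
    simp only
    rw [← ENNReal.rpow_natCast, ← ENNReal.rpow_mul, ← hcast, inv_mul_cancel₀ hn1.ne',
      ENNReal.rpow_one, ENNReal.ofReal_mul two_pos.le, mul_pow, ENNReal.ofReal_pow (norm_nonneg A),
      ENNReal.ofReal_ofNat, ← ENNReal.mul_div_right_comm, mul_comm _ J, mul_comm _ J,
      ENNReal.mul_div_mul_left _ _ hJ0 hJ]

/-- For a `W^{1,1}_loc` homeomorphism `f : Ω → Ω'` with weak gradient `g`, one has
`K^fine_f(x)^{n-1} J_f(x) = (2ⁿ/ω_n) ‖∇f(x)‖ⁿ` for a.e. `x ∈ Ω` with `K^fine_f(x) < ∞`. -/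
theorem Kfine_pow_mul_Jvol_eq (hn : 2 ≤ n) (Ω Ω' : Set (En n)) (hΩ : IsOpen Ω)
    (hΩ' : IsOpen Ω') (f : En n → En n) (g : En n → (En n →L[ℝ] En n))
    (hcont : ContinuousOn f Ω) (hinj : InjOn f Ω) (himg : f '' Ω = Ω')
    (hopen : ∀ V ⊆ Ω, IsOpen V → IsOpen (f '' V))
    (hfloc : LocallyIntegrableOn f Ω)
    (hgloc : LocallyIntegrableOn (fun x => ‖g x‖) Ω)
    (hweak : HasWeakGradOn f g Ω) :
    ∀ᵐ x ∂(volume.restrict Ω), Kfine f x < ∞ →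
      Kfine f x ^ (n - 1) * Jvol f x
        = 2 ^ n * ENNReal.ofReal (‖g x‖ ^ n) / volume (ball (0 : En n) 1) := by
  have hn0 : 0 < n := by omega
  have hlocal : ∀ p R, 0 < R → closedBall p (2 * R) ⊆ Ω → ∀ᵐ x, x ∈ ball p R →
      Kfine f x < ∞ → Kfine f x ^ (n - 1) * Jvol f x
        = 2 ^ n * ENNReal.ofReal (‖g x‖ ^ n) / volume (ball (0 : En n) 1) := by
    intro p R hR0 hR
    have hsub : closedBall p R ⊆ Ω :=
      (closedBall_subset_closedBall (by linarith)).trans hR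
    have hg : IntegrableOn g (closedBall p R) := integrableOn_weakGrad hΩ hcont hinj hweak hR0 hR
    filter_upwards [ae_tendsto_lintegral_sub_div hg, ae_tendsto_measure_image_ball hn0
      (hcont.mono hsub) (hinj.mono hsub)] with x hx1 hx2 hxp hK
    obtain ⟨J, hJ, hlim⟩ := hx2 hxp
    have hδ : 0 < R - dist x p := sub_pos.2 (mem_ball.1 hxp)
    have hxR : ∀ r ≤ (R - dist x p) / 2, closedBall x r ⊆ closedBall p R := fun r hr =>
      closedBall_subset_closedBall' (by linarith)
    refine Kfine_pow_mul_Jvol_eq_of_finely_differentiable hn (fun ε hε =>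
      exists_finelyOpen1_remainder_le hn hΩ hcont hweak (half_pos hδ)
        ((hxR _ le_rfl).trans hsub) (hg.mono_set (hxR _ le_rfl)) (hx1 hxp) hε) hJ hlim ?_ hK
    filter_upwards [Ioo_mem_nhdsGT (half_pos hδ)] with r hr
    have hball : ball x r ⊆ Ω := ball_subset_closedBall.trans ((hxR r hr.2.le).trans hsub)
    exact ((hopen _ hball isOpen_ball).measure_pos volume
      ⟨f x, mem_image_of_mem f (mem_ball_self hr.1)⟩).ne'
  rw [ae_restrict_iff' hΩ.measurableSet, ae_iff]
  refine measure_null_of_locally_null _ fun p hp => ?_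
  have hpΩ : p ∈ Ω := by
    by_contra h
    exact hp fun h' => absurd h' h
  obtain ⟨R, hR0, hR⟩ := nhds_basis_closedBall.mem_iff.1 (hΩ.mem_nhds hpΩ)
  have hR2 : closedBall p (2 * (R / 2)) ⊆ Ω := by rwa [mul_div_cancel₀ _ two_ne_zero]
  refine ⟨_, inter_mem_nhdsWithin _ (ball_mem_nhds p (half_pos hR0)), ?_⟩
  refine measure_mono_null ?_ (ae_iff.1 (hlocal p (R / 2) (half_pos hR0) hR2))
  rintro y ⟨hy, hyb⟩ h
  exact hy fun _ => h hyb

end
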